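/- For every TS-module M of finite length and every smooth character χ of T, the χ-coinvariants M_{T,χ} and the χ-eigenspace M^{T,χ} are finite-dimensional and dim M_{T,χ} − dim M^{T,χ} = deg(M), where deg(M) is the number of Jordan–Hölder constituents of M isomorphic to 𝕊. -/

import Mathlib

noncomputable section

open scoped Classical

namespace PSW

/-! ### The affine group `λ.b : x ↦ λ·x + b` over a field `K`. -/

@[ext]
structure Aff (K : Type*) [Field K] where
  t : Kˣ
  s : K

namespace Aff

variable {K : Type*} [Field K]

instance : Mul (Aff K) := ⟨fun g h => ⟨g.t * h.t, g.s + (g.t : K) * h.s⟩⟩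
instance : One (Aff K) := ⟨⟨1, 0⟩⟩
instance : Inv (Aff K) := ⟨fun g => ⟨g.t⁻¹, -(((g.t⁻¹ : Kˣ) : K) * g.s)⟩⟩

@[simp] lemma mul_t (g h : Aff K) : (g * h).t = g.t * h.t := rfl
@[simp] lemma mul_s (g h : Aff K) : (g * h).s = g.s + (g.t : K) * h.s := rfl
@[simp] lemma one_t : (1 : Aff K).t = 1 := rfl
@[simp] lemma one_s : (1 : Aff K).s = 0 := rfl
@[simp] lemma inv_t (g : Aff K) : (g⁻¹).t = g.t⁻¹ := rfl
@[simp] lemma inv_s (g : Aff K) : (g⁻¹).s = -(((g.t⁻¹ : Kˣ) : K) * g.s) := rfl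

instance : Group (Aff K) where
  mul_assoc a b c := by
    ext
    · simp [mul_assoc]
    · simp only [mul_s, mul_t, Units.val_mul]; ring
  one_mul a := by ext <;> simp
  mul_one a := by ext <;> simp
  inv_mul_cancel a := by
    ext
    · simp
    · simp

/-- The element `x_λ` of the group `TS`. -/
def xT (u : Kˣ) : Aff K := ⟨u, 0⟩

/-- The element `s_b` of the group `TS`. -/
def sS (b : K) : Aff K := ⟨1, b⟩

@[simp] lemma xT_t (u : Kˣ) : (xT u : Aff K).t = u := rfl
@[simp] lemma xT_s (u : Kˣ) : (xT u : Aff K).s = 0 := rfl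
@[simp] lemma sS_t (b : K) : (sS b : Aff K).t = 1 := rfl
@[simp] lemma sS_s (b : K) : (sS b : Aff K).s = b := rfl

/-- `T ≅ k^×` as a subgroup of `TS`. -/
def xTHom : Kˣ →* Aff K where
  toFun := xT
  map_one' := rfl
  map_mul' u v := by ext <;> simp [xT]

@[simp] lemma xTHom_apply (u : Kˣ) : (xTHom u : Aff K) = xT u := rfl

lemma mul_sS (g : Aff K) (b : K) : g * sS b = sS ((g.t : K) * b) * g := by
  ext
  · simp
  · simp [add_comm]

lemma sS_mul (b : K) (g : Aff K) : sS b * g = g * sS (((g.t⁻¹ : Kˣ) : K) * b) := by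
  ext
  · simp
  · simp [Units.mul_inv_cancel_left, add_comm]

lemma aff_decomp (g : Aff K) : g = xT g.t * sS (((g.t⁻¹ : Kˣ) : K) * g.s) := by
  ext
  · simp
  · simp [Units.mul_inv_cancel_left]

instance [TopologicalSpace K] : TopologicalSpace (Aff K) :=
  TopologicalSpace.induced (fun g : Aff K => ((g.t, g.s) : Kˣ × K)) inferInstance

end Aff

/-! ### Generalities on representations of a monoid on complex vector spaces. -/

namespace GRep

variable {G : Type*} [Monoid G]

section MonoidModules

variable {V W : Type*} [AddCommMonoid V] [Module ℂ V] [AddCommMonoid W] [Module ℂ W]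

/-- A submodule invariant under the representation. -/
def Invariant (ρ : Representation ℂ G V) (U : Submodule ℂ V) : Prop :=
  ∀ (g : G) (v : V), v ∈ U → ρ g v ∈ U

/-- Equivariance of a linear map with respect to two representations. -/
def Equivariant (ρ : Representation ℂ G V) (σ : Representation ℂ G W) (f : V →ₗ[ℂ] W) : Prop :=
  ∀ (g : G) (v : V), f (ρ g v) = σ g (f v)

/-- Isomorphism of representations. -/
def Iso (ρ : Representation ℂ G V) (σ : Representation ℂ G W) : Prop :=
  ∃ e : V ≃ₗ[ℂ] W, ∀ (g : G) (v : V), e (ρ g v) = σ g (e v)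

/-- Irreducibility. -/
def Irred (ρ : Representation ℂ G V) : Prop :=
  Nontrivial V ∧ ∀ U : Submodule ℂ V, Invariant ρ U → U = ⊥ ∨ U = ⊤

/-- Subrepresentation on an invariant submodule. -/
def sub (ρ : Representation ℂ G V) {U : Submodule ℂ V} (hU : Invariant ρ U) :
    Representation ℂ G ↥U where
  toFun g := (ρ g).restrict fun v hv => hU g v hv
  map_one' := by
    apply LinearMap.ext; intro v; apply Subtype.ext
    simp [LinearMap.restrict_apply]
  map_mul' g h := by
    apply LinearMap.ext; intro v; apply Subtype.ext
    simp [LinearMap.restrict_apply]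

@[simp] lemma sub_apply (ρ : Representation ℂ G V) {U : Submodule ℂ V} (hU : Invariant ρ U)
    (g : G) (v : ↥U) : ((sub ρ hU g v : ↥U) : V) = ρ g (v : V) := rfl

lemma ker_invariant (ρ : Representation ℂ G V) (σ : Representation ℂ G W)
    (f : V →ₗ[ℂ] W) (hf : Equivariant ρ σ f) : Invariant ρ (LinearMap.ker f) := by
  intro g v hv
  rw [LinearMap.mem_ker] at hv ⊢
  rw [hf g v, hv, map_zero]

lemma range_invariant (ρ : Representation ℂ G V) (σ : Representation ℂ G W)
    (f : V →ₗ[ℂ] W) (hf : Equivariant ρ σ f) : Invariant σ (LinearMap.range f) := by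
  rintro g w ⟨v, rfl⟩
  exact ⟨ρ g v, hf g v⟩

lemma map_invariant (ρ : Representation ℂ G V) (σ : Representation ℂ G W)
    (f : V →ₗ[ℂ] W) (hf : Equivariant ρ σ f) (U : Submodule ℂ V) (hU : Invariant ρ U) :
    Invariant σ (U.map f) := by
  rintro g w ⟨v, hv, rfl⟩
  exact ⟨ρ g v, hU g v hv, hf g v⟩

end MonoidModules

section GroupModules

variable {V W : Type*} [AddCommGroup V] [Module ℂ V] [AddCommGroup W] [Module ℂ W]

/-- Quotient representation. -/
def quot (ρ : Representation ℂ G V) (U : Submodule ℂ V) (hU : Invariant ρ U) :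
    Representation ℂ G (V ⧸ U) where
  toFun g := U.mapQ U (ρ g) fun v hv => hU g v hv
  map_one' := by
    apply LinearMap.ext; intro x
    obtain ⟨v, rfl⟩ := Submodule.Quotient.mk_surjective U x
    simp [Submodule.mapQ_apply]
  map_mul' g h := by
    apply LinearMap.ext; intro x
    obtain ⟨v, rfl⟩ := Submodule.Quotient.mk_surjective U x
    simp [Submodule.mapQ_apply]

@[simp] lemma quot_apply (ρ : Representation ℂ G V) (U : Submodule ℂ V) (hU : Invariant ρ U)
    (g : G) (v : V) :
    quot ρ U hU g (Submodule.Quotient.mk v) = Submodule.Quotient.mk (ρ g v) := rfl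

/-- Subquotient representation on `B/A`. -/
def subquot (ρ : Representation ℂ G V) {A B : Submodule ℂ V}
    (hA : Invariant ρ A) (hB : Invariant ρ B) :
    Representation ℂ G (↥B ⧸ A.comap B.subtype) :=
  quot (sub ρ hB) (A.comap B.subtype) fun g v hv => hA g v.1 hv

lemma mkQ_equivariant (ρ : Representation ℂ G V) (U : Submodule ℂ V) (hU : Invariant ρ U) :
    Equivariant ρ (quot ρ U hU) U.mkQ := by
  intro g v
  show Submodule.Quotient.mk (ρ g v) = quot ρ U hU g (Submodule.Quotient.mk v)
  rw [quot_apply]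

end GroupModules

end GRep

/-! ### TS-modules: representations of the affine group. -/

/-- A `TS`-module structure on `V` is a representation of the group `TS ≅ Gl_a(1)`. -/
abbrev Rep (K : Type*) [Field K] (V : Type*) [AddCommGroup V] [Module ℂ V] :=
  Representation ℂ (Aff K) V

section RepDefs

open Aff

variable {K : Type*} [Field K]
variable {V W : Type*} [AddCommGroup V] [Module ℂ V] [AddCommGroup W] [Module ℂ W]

/-- Smoothness: every vector has open stabilizer. -/
def IsSmoothRep [TopologicalSpace K] (ρ : Rep K V) : Prop :=
  ∀ v : V, IsOpen {g : Aff K | ρ g v = v}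

/-- Smoothness of a `T`-module, i.e. of a representation of `T ≅ k^×`. -/
def TIsSmooth {X : Type*} [AddCommMonoid X] [Module ℂ X] [TopologicalSpace K]
    (τ : Representation ℂ Kˣ X) : Prop :=
  ∀ x : X, IsOpen {u : Kˣ | τ u x = x}

/-- Smooth character of `T ≅ k^×` (open kernel, equivalently locally constant). -/
def SmoothMulChar [TopologicalSpace K] (χ : Kˣ →* ℂˣ) : Prop :=
  IsOpen {u : Kˣ | χ u = 1}

/-- The space `V^S` of `S`-invariants. -/
def sInv (ρ : Rep K V) : Submodule ℂ V where
  carrier := {v | ∀ b : K, ρ (sS b) v = v}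
  zero_mem' := fun b => map_zero _
  add_mem' {a b} ha hb := fun c => by rw [map_add, ha c, hb c]
  smul_mem' c v hv := fun b => by rw [map_smul, hv b]

@[simp] lemma mem_sInv (ρ : Rep K V) (v : V) :
    v ∈ sInv ρ ↔ ∀ b : K, ρ (sS b) v = v := Iff.rfl

/-- The `χ`-eigenspace `X^{T,χ}` of a `T`-module. -/
def tEigenT {X : Type*} [AddCommMonoid X] [Module ℂ X]
    (τ : Representation ℂ Kˣ X) (χ : Kˣ →* ℂˣ) : Submodule ℂ X where
  carrier := {x | ∀ u : Kˣ, τ u x = (χ u : ℂ) • x}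
  zero_mem' := fun u => by simp
  add_mem' {a b} ha hb := fun u => by rw [map_add, ha u, hb u, smul_add]
  smul_mem' c x hx := fun u => by rw [map_smul, hx u]; exact smul_comm c ((χ u : ℂ)) x

@[simp] lemma mem_tEigenT {X : Type*} [AddCommMonoid X] [Module ℂ X]
    (τ : Representation ℂ Kˣ X) (χ : Kˣ →* ℂˣ) (x : X) :
    x ∈ tEigenT τ χ ↔ ∀ u : Kˣ, τ u x = (χ u : ℂ) • x := Iff.rfl

/-- The `χ`-eigenspace `V^{T,χ}` of a `TS`-module. -/
def tEigen (ρ : Rep K V) (χ : Kˣ →* ℂˣ) : Submodule ℂ V := tEigenT (ρ.comp xTHom) χ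

/-- The kernel of the projection to the `S`-coinvariants `V_S`. -/
def sCoinvKer (ρ : Rep K V) : Submodule ℂ V :=
  Submodule.span ℂ {w : V | ∃ (b : K) (v : V), w = ρ (sS b) v - v}

/-- The kernel of the projection to the twisted coinvariants `V_{S,ψ'}`. -/
def sTwistKer (ρ : Rep K V) (ψ' : AddChar K ℂ) : Submodule ℂ V :=
  Submodule.span ℂ {w : V | ∃ (b : K) (v : V), w = ρ (sS b) v - ψ' b • v}

/-- The kernel of the projection to the `χ`-coinvariants `X_{T,χ}` of a `T`-module. -/
def tTwistKerT {X : Type*} [AddCommGroup X] [Module ℂ X]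
    (τ : Representation ℂ Kˣ X) (χ : Kˣ →* ℂˣ) : Submodule ℂ X :=
  Submodule.span ℂ {w : X | ∃ (u : Kˣ) (x : X), w = τ u x - (χ u : ℂ) • x}

/-- The kernel of the projection to the `χ`-coinvariants `V_{T,χ}` of a `TS`-module. -/
def tTwistKer (ρ : Rep K V) (χ : Kˣ →* ℂˣ) : Submodule ℂ V := tTwistKerT (ρ.comp xTHom) χ

lemma sCoinvKer_invariant (ρ : Rep K V) : GRep.Invariant ρ (sCoinvKer ρ) := by
  intro g v hv
  have h : sCoinvKer ρ ≤ Submodule.comap (ρ g) (sCoinvKer ρ) := by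
    refine Submodule.span_le.2 ?_
    rintro w ⟨b, v', rfl⟩
    simp only [SetLike.mem_coe, Submodule.mem_comap, map_sub]
    have h1 : ρ g (ρ (sS b) v') = ρ (sS ((g.t : K) * b)) (ρ g v') := by
      rw [← Module.End.mul_apply, ← map_mul, mul_sS, map_mul, Module.End.mul_apply]
    rw [h1]
    exact Submodule.subset_span ⟨(g.t : K) * b, ρ g v', rfl⟩
  exact h hv

lemma sInv_invariant (ρ : Rep K V) : GRep.Invariant ρ (sInv ρ) := by
  intro g v hv
  rw [mem_sInv] at hv ⊢
  intro b
  have h1 : ρ (sS b) (ρ g v) = ρ g (ρ (sS (((g.t⁻¹ : Kˣ) : K) * b)) v) := by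
    rw [← Module.End.mul_apply, ← map_mul, sS_mul, map_mul, Module.End.mul_apply]
  rw [h1, hv _]

/-- The `S`-coinvariants `π₀(V) = V_S` as a `TS`-module (`S` acting trivially). -/
def piZeroRep (ρ : Rep K V) : Rep K (V ⧸ sCoinvKer ρ) :=
  GRep.quot ρ (sCoinvKer ρ) (sCoinvKer_invariant ρ)

/-- The `S`-coinvariants `π₀(V) = V_S` as a `T`-module. -/
def piZeroT (ρ : Rep K V) : Representation ℂ Kˣ (V ⧸ sCoinvKer ρ) :=
  (piZeroRep ρ).comp xTHom

/-- The `T`-module structure on `κ(V) = V^S`. -/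
def sInvT (ρ : Rep K V) : Representation ℂ Kˣ ↥(sInv ρ) :=
  (GRep.sub ρ (sInv_invariant ρ)).comp xTHom

/-- A `TS`-module is perfect if all its eigenspaces `V^{T,χ}` for smooth `χ` vanish. -/
def Perfect [TopologicalSpace K] (ρ : Rep K V) : Prop :=
  ∀ χ : Kˣ →* ℂˣ, SmoothMulChar χ → tEigen ρ χ = ⊥

/-- A finite-dimensional `T`-module is cyclic if each generalized eigenspace is a single
Jordan block; equivalently all eigenspaces `X^{T,χ}` have dimension at most one. -/
def TCyclic {X : Type*} [AddCommGroup X] [Module ℂ X]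
    (τ : Representation ℂ Kˣ X) : Prop :=
  ∀ χ : Kˣ →* ℂˣ, Module.finrank ℂ ↥(tEigenT τ χ) ≤ 1

lemma sCoinvKer_le_comap (ρ : Rep K V) (σ : Rep K W)
    (f : V →ₗ[ℂ] W) (hf : GRep.Equivariant ρ σ f) :
    sCoinvKer ρ ≤ (sCoinvKer σ).comap f := by
  refine Submodule.span_le.2 ?_
  rintro w ⟨b, v, rfl⟩
  simp only [SetLike.mem_coe, Submodule.mem_comap, map_sub]
  rw [hf]
  exact Submodule.subset_span ⟨b, f v, rfl⟩

/-- The map induced by an equivariant map on the `S`-coinvariants `π₀`. -/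
def piZeroMap (ρ : Rep K V) (σ : Rep K W) (f : V →ₗ[ℂ] W) (hf : GRep.Equivariant ρ σ f) :
    (V ⧸ sCoinvKer ρ) →ₗ[ℂ] (W ⧸ sCoinvKer σ) :=
  Submodule.mapQ _ _ f (sCoinvKer_le_comap ρ σ f hf)

lemma piZeroMap_equivariant (ρ : Rep K V) (σ : Rep K W) (f : V →ₗ[ℂ] W)
    (hf : GRep.Equivariant ρ σ f) :
    GRep.Equivariant (piZeroRep ρ) (piZeroRep σ) (piZeroMap ρ σ f hf) := by
  intro g x
  obtain ⟨v, rfl⟩ := Submodule.Quotient.mk_surjective _ x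
  show piZeroMap ρ σ f hf (piZeroRep ρ g (Submodule.Quotient.mk v))
      = piZeroRep σ g (piZeroMap ρ σ f hf (Submodule.Quotient.mk v))
  rw [show piZeroRep ρ g (Submodule.Quotient.mk v) = Submodule.Quotient.mk (ρ g v) from rfl]
  rw [show piZeroMap ρ σ f hf (Submodule.Quotient.mk v) = Submodule.Quotient.mk (f v) from rfl]
  rw [show piZeroMap ρ σ f hf (Submodule.Quotient.mk (ρ g v))
      = Submodule.Quotient.mk (f (ρ g v)) from rfl]
  rw [show piZeroRep σ g (Submodule.Quotient.mk (f v)) = Submodule.Quotient.mk (σ g (f v)) from rfl]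
  rw [hf]

lemma kappaImg_invariant (ρ : Rep K V) :
    GRep.Invariant (piZeroT ρ) ((sInv ρ).map (sCoinvKer ρ).mkQ) := by
  rintro u w ⟨v, hv, rfl⟩
  refine ⟨ρ (xT u) v, sInv_invariant ρ (xT u) v hv, ?_⟩
  rfl

end RepDefs

/-! ### Composition series and degree. -/

/-- A composition series for a `TS`-module, witnessing finite length: a maximal chain of
invariant submodules (the subquotients are then irreducible). -/
structure CompSeries {K : Type*} [Field K] {V : Type*} [AddCommGroup V] [Module ℂ V]
    (ρ : Rep K V) where
  n : ℕ
  W : ℕ → Submodule ℂ V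
  bot : W 0 = ⊥
  top : W n = ⊤
  inv : ∀ i, GRep.Invariant ρ (W i)
  lt : ∀ i < n, W i < W (i + 1)
  maximal : ∀ i < n, ∀ C : Submodule ℂ V, GRep.Invariant ρ C → W i ≤ C → C ≤ W (i + 1) →
    C = W i ∨ C = W (i + 1)

/-- The number of Jordan–Hölder constituents of a composition series isomorphic to a given
representation `σ` (applied with `σ = 𝕊`, this is the degree). -/
def CompSeries.deg {K : Type*} [Field K] {V : Type*} [AddCommGroup V] [Module ℂ V]
    {ρ : Rep K V} (c : CompSeries ρ) {W₀ : Type*} [AddCommMonoid W₀] [Module ℂ W₀]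
    (σ : Representation ℂ (Aff K) W₀) : ℕ :=
  (Finset.univ.filter fun i : Fin c.n =>
    GRep.Iso (GRep.subquot ρ (c.inv i.1) (c.inv (i.1 + 1))) σ).card

/-! ### Fiber products of a `T`-module with a `TS`-module over a `T`-module. -/

section Fiber

open Aff

variable {K : Type*} [Field K]
variable {X Y E : Type*} [AddCommGroup X] [Module ℂ X] [AddCommGroup Y] [Module ℂ Y]
  [AddCommGroup E] [Module ℂ E]

/-- The product `TS`-module `X × E` where `S` acts trivially on the `T`-module `X`. -/
def prodRepTE (τ : Representation ℂ Kˣ X) (ρ : Rep K E) : Rep K (X × E) where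
  toFun g := (τ g.t).prodMap (ρ g)
  map_one' := by
    apply LinearMap.ext; rintro ⟨x, v⟩
    simp
  map_mul' g h := by
    apply LinearMap.ext; rintro ⟨x, v⟩
    simp [map_mul]

/-- The underlying space of the fiber product `𝔼[f] = X ×_Y E`. -/
def fiberKer (f : X →ₗ[ℂ] Y) (q : E →ₗ[ℂ] Y) : Submodule ℂ (X × E) :=
  LinearMap.ker (f.comp (LinearMap.fst ℂ X E) - q.comp (LinearMap.snd ℂ X E))

lemma mem_fiberKer (f : X →ₗ[ℂ] Y) (q : E →ₗ[ℂ] Y) (p : X × E) :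
    p ∈ fiberKer f q ↔ f p.1 = q p.2 := by
  simp [fiberKer, sub_eq_zero]

lemma fiber_invariant (τX : Representation ℂ Kˣ X) (ρE : Rep K E)
    (τY : Representation ℂ Kˣ Y) (f : X →ₗ[ℂ] Y) (q : E →ₗ[ℂ] Y)
    (hf : ∀ (u : Kˣ) (x : X), f (τX u x) = τY u (f x))
    (hq : sCoinvKer ρE ≤ LinearMap.ker q)
    (hqT : ∀ (u : Kˣ) (v : E), q (ρE (xT u) v) = τY u (q v)) :
    GRep.Invariant (prodRepTE τX ρE) (fiberKer f q) := by
  intro g p hp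
  rw [mem_fiberKer] at hp ⊢
  have hsb : q (ρE (sS (((g.t⁻¹ : Kˣ) : K) * g.s)) p.2) = q p.2 := by
    have h1 : ρE (sS (((g.t⁻¹ : Kˣ) : K) * g.s)) p.2 - p.2 ∈ sCoinvKer ρE :=
      Submodule.subset_span ⟨_, _, rfl⟩
    have h2 := hq h1
    rw [LinearMap.mem_ker, map_sub, sub_eq_zero] at h2
    exact h2
  have hdecomp : ρE g p.2 = ρE (xT g.t) (ρE (sS (((g.t⁻¹ : Kˣ) : K) * g.s)) p.2) := by
    conv_lhs => rw [aff_decomp g]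
    rw [map_mul, Module.End.mul_apply]
  have h1 : ((prodRepTE τX ρE) g p).1 = τX g.t p.1 := rfl
  have h2 : ((prodRepTE τX ρE) g p).2 = ρE g p.2 := rfl
  rw [h1, h2, hf, hp, hdecomp, hqT, hsb]

end Fiber

/-! ### Jordan blocks of finite-dimensional `T`-modules. -/

section Jordan

variable {K : Type*} [Field K]
variable {X : Type*} [AddCommGroup X] [Module ℂ X]

/-- A Jordan block of a `T`-module: a nonzero indecomposable invariant direct summand. -/
def IsJordanBlock (τ : Representation ℂ Kˣ X) (J : Submodule ℂ X) : Prop :=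
  J ≠ ⊥ ∧ GRep.Invariant τ J ∧ (∃ C : Submodule ℂ X, GRep.Invariant τ C ∧ IsCompl J C) ∧
    ∀ A B : Submodule ℂ X, GRep.Invariant τ A → GRep.Invariant τ B → A ≤ J → B ≤ J →
      A ⊓ B = ⊥ → A ⊔ B = J → A = ⊥ ∨ B = ⊥

end Jordan

/-! ### Invariants and coinvariants for a normal subgroup of an arbitrary group. -/

section Grp

variable {Γ : Type*} [Group Γ]
variable {V W : Type*} [AddCommGroup V] [Module ℂ V] [AddCommGroup W] [Module ℂ W]

/-- Invariants `V^N` under a subgroup `N`. -/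
def grpInv (ρ : Representation ℂ Γ V) (N : Subgroup Γ) : Submodule ℂ V where
  carrier := {v | ∀ n ∈ N, ρ n v = v}
  zero_mem' := fun n _ => map_zero _
  add_mem' {a b} ha hb := fun n hn => by rw [map_add, ha n hn, hb n hn]
  smul_mem' c v hv := fun n hn => by rw [map_smul, hv n hn]

@[simp] lemma mem_grpInv (ρ : Representation ℂ Γ V) (N : Subgroup Γ) (v : V) :
    v ∈ grpInv ρ N ↔ ∀ n ∈ N, ρ n v = v := Iff.rfl

/-- The kernel of the projection to the coinvariants `V_N` under a subgroup `N`. -/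
def grpCoinvKer (ρ : Representation ℂ Γ V) (N : Subgroup Γ) : Submodule ℂ V :=
  Submodule.span ℂ {w : V | ∃ n ∈ N, ∃ v : V, w = ρ n v - v}

lemma grpInv_invariant (ρ : Representation ℂ Γ V) (N : Subgroup Γ) [hN : N.Normal] :
    GRep.Invariant ρ (grpInv ρ N) := by
  intro γ v hv
  rw [mem_grpInv] at hv ⊢
  intro n hn
  have hmem : γ⁻¹ * n * γ ∈ N := by
    have := hN.conj_mem n hn γ⁻¹
    simpa using this
  have key : ρ n (ρ γ v) = ρ γ (ρ (γ⁻¹ * n * γ) v) := by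
    rw [← Module.End.mul_apply, ← map_mul, ← Module.End.mul_apply, ← map_mul]
    congr 1
    group
  rw [key, hv _ hmem]

lemma grpCoinvKer_invariant (ρ : Representation ℂ Γ V) (N : Subgroup Γ) [hN : N.Normal] :
    GRep.Invariant ρ (grpCoinvKer ρ N) := by
  intro γ v hv
  have h : grpCoinvKer ρ N ≤ Submodule.comap (ρ γ) (grpCoinvKer ρ N) := by
    refine Submodule.span_le.2 ?_
    rintro w ⟨n, hn, v', rfl⟩
    simp only [SetLike.mem_coe, Submodule.mem_comap, map_sub]
    have key : ρ γ (ρ n v') = ρ (γ * n * γ⁻¹) (ρ γ v') := by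
      rw [← Module.End.mul_apply, ← map_mul, ← Module.End.mul_apply, ← map_mul]
      congr 1
      group
    rw [key]
    exact Submodule.subset_span ⟨γ * n * γ⁻¹, hN.conj_mem n hn γ, ρ γ v', rfl⟩
  exact h hv

/-- The map induced on `N`-invariants by an equivariant map. -/
def grpInvRestrict (ρ : Representation ℂ Γ V) (σ : Representation ℂ Γ W) (N : Subgroup Γ)
    (f : V →ₗ[ℂ] W) (hf : GRep.Equivariant ρ σ f) : ↥(grpInv ρ N) →ₗ[ℂ] ↥(grpInv σ N) :=
  f.restrict (fun v hv => by
    rw [mem_grpInv] at hv ⊢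
    intro n hn
    rw [← hf n v, hv n hn])

lemma grpCoinvKer_le_comap (ρ : Representation ℂ Γ V) (σ : Representation ℂ Γ W) (N : Subgroup Γ)
    (f : V →ₗ[ℂ] W) (hf : GRep.Equivariant ρ σ f) :
    grpCoinvKer ρ N ≤ (grpCoinvKer σ N).comap f := by
  refine Submodule.span_le.2 ?_
  rintro w ⟨n, hn, v, rfl⟩
  simp only [SetLike.mem_coe, Submodule.mem_comap, map_sub]
  rw [hf]
  exact Submodule.subset_span ⟨n, hn, f v, rfl⟩

/-- The map induced on `N`-coinvariants by an equivariant map. -/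
def grpCoinvMap (ρ : Representation ℂ Γ V) (σ : Representation ℂ Γ W) (N : Subgroup Γ)
    (f : V →ₗ[ℂ] W) (hf : GRep.Equivariant ρ σ f) :
    (V ⧸ grpCoinvKer ρ N) →ₗ[ℂ] (W ⧸ grpCoinvKer σ N) :=
  Submodule.mapQ _ _ f (grpCoinvKer_le_comap ρ σ N f hf)

end Grp

/-! ### Tate L-factors of finite-dimensional `T`-modules. -/

section Lfactor

variable {K : Type*} [NontriviallyNormedField K]
variable {X : Type*} [AddCommGroup X] [Module ℂ X]

/-- The part of a `T`-module where the `χ`-twisted action is unramified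
(trivial on the norm-one units). -/
def unrPart (τ : Representation ℂ Kˣ X) (χ : Kˣ →* ℂˣ) : Submodule ℂ X where
  carrier := {x | ∀ u : Kˣ, ‖(u : K)‖ = 1 → (χ u : ℂ) • τ u x = x}
  zero_mem' := fun u _ => by simp
  add_mem' {a b} ha hb := fun u hu => by rw [map_add, smul_add, ha u hu, hb u hu]
  smul_mem' c x hx := fun u hu => by
    rw [map_smul, smul_comm, hx u hu]

lemma unrPart_stable (τ : Representation ℂ Kˣ X) (χ : Kˣ →* ℂˣ) (ϖ : Kˣ) :
    ∀ x ∈ unrPart τ χ, ((χ ϖ : ℂ) • τ ϖ) x ∈ unrPart τ χ := by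
  intro x hx u hu
  have comm : τ u (τ ϖ x) = τ ϖ (τ u x) := by
    rw [← Module.End.mul_apply, ← map_mul, mul_comm, map_mul, Module.End.mul_apply]
  calc (χ u : ℂ) • τ u (((χ ϖ : ℂ) • τ ϖ) x)
      = (χ ϖ : ℂ) • ((χ u : ℂ) • τ u (τ ϖ x)) := by
        rw [LinearMap.smul_apply, map_smul, smul_comm]
    _ = (χ ϖ : ℂ) • τ ϖ ((χ u : ℂ) • τ u x) := by rw [comm, map_smul]
    _ = ((χ ϖ : ℂ) • τ ϖ) x := by rw [hx u hu, LinearMap.smul_apply]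

/-- The twisted uniformizer action on the unramified part. -/
def twistOp (τ : Representation ℂ Kˣ X) (χ : Kˣ →* ℂˣ) (ϖ : Kˣ) :
    ↥(unrPart τ χ) →ₗ[ℂ] ↥(unrPart τ χ) :=
  LinearMap.restrict ((χ ϖ : ℂ) • τ ϖ) (unrPart_stable τ χ ϖ)

/-- The Tate `L`-factor `L(s, χ ⊗ X) = det(1 - q^{-s}·(χ·τ)(ϖ) | X^{unr,χ})⁻¹` of a
(finite-dimensional) `T`-module `X`, relative to a uniformizer `ϖ`. -/
def Lfactor (τ : Representation ℂ Kˣ X) (χ : Kˣ →* ℂˣ) (ϖ : Kˣ) (s : ℂ) : ℂ :=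
  (LinearMap.det (LinearMap.id - (‖(ϖ : K)‖ : ℂ) ^ s • twistOp τ χ ϖ))⁻¹

end Lfactor

/-! ### The concrete `TS`-modules `𝕊`, `C_c^∞(k)`, `C_b^∞(k^×)` and `𝔼[χ]`. -/

section Concrete

open Aff

variable (K : Type*) [NontriviallyNormedField K]

/-- The representation of `TS` on functions on `k^×`:
`(s_b g)(x) = ψ(bx) g(x)`, `(x_λ g)(x) = g(xλ)`. -/
def repCx (ψ : AddChar K ℂ) : Rep K (Kˣ → ℂ) where
  toFun g :=
    { toFun := fun f x => ψ (g.s * (x : K)) * f (x * g.t)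
      map_add' := fun f₁ f₂ => by funext x; simp [mul_add]
      map_smul' := fun c f => by
        funext x
        simp only [Pi.smul_apply, smul_eq_mul, RingHom.id_apply]
        ring }
  map_one' := by
    apply LinearMap.ext; intro f; funext x
    simp
  map_mul' g h := by
    apply LinearMap.ext; intro f; funext x
    show ψ ((g.s + (g.t : K) * h.s) * (x : K)) * f (x * (g.t * h.t))
        = ψ (g.s * (x : K)) * (ψ (h.s * ((x * g.t : Kˣ) : K)) * f (x * g.t * h.t))
    have harg : (g.s + (g.t : K) * h.s) * (x : K)
        = g.s * (x : K) + h.s * ((x * g.t : Kˣ) : K) := by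
      push_cast
      ring
    rw [harg, AddChar.map_add_eq_mul, ← mul_assoc x g.t h.t]
    ring

@[simp] lemma repCx_apply (ψ : AddChar K ℂ) (g : Aff K) (f : Kˣ → ℂ) (x : Kˣ) :
    repCx K ψ g f x = ψ (g.s * (x : K)) * f (x * g.t) := rfl

/-- The `χ`-twisted representation of `TS` on functions on `k`:
`(s_b g)(x) = ψ(bx) g(x)`, `(x_λ g)(x) = χ(λ) g(xλ)`.  (Take `χ = 1` for the
untwisted action on `C_c^∞(k)`; the module `𝔼[χ]` is `C_c^∞(k)` with the twisted action.) -/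
def repCc (ψ : AddChar K ℂ) (χ : Kˣ →* ℂˣ) : Rep K (K → ℂ) where
  toFun g :=
    { toFun := fun f x => (χ g.t : ℂ) * ψ (g.s * x) * f (x * (g.t : K))
      map_add' := fun f₁ f₂ => by funext x; simp [mul_add]
      map_smul' := fun c f => by
        funext x
        simp only [Pi.smul_apply, smul_eq_mul, RingHom.id_apply]
        ring }
  map_one' := by
    apply LinearMap.ext; intro f; funext x
    simp
  map_mul' g h := by
    apply LinearMap.ext; intro f; funext x
    show (χ (g.t * h.t) : ℂ) * ψ ((g.s + (g.t : K) * h.s) * x) * f (x * ((g.t * h.t : Kˣ) : K))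
        = (χ g.t : ℂ) * ψ (g.s * x) * ((χ h.t : ℂ) * ψ (h.s * (x * (g.t : K)))
            * f (x * (g.t : K) * (h.t : K)))
    have harg : (g.s + (g.t : K) * h.s) * x = g.s * x + h.s * (x * (g.t : K)) := by ring
    have harg2 : x * ((g.t * h.t : Kˣ) : K) = x * (g.t : K) * (h.t : K) := by
      push_cast
      ring
    rw [harg, harg2, AddChar.map_add_eq_mul, map_mul]
    push_cast
    ring

@[simp] lemma repCc_apply (ψ : AddChar K ℂ) (χ : Kˣ →* ℂˣ) (g : Aff K) (f : K → ℂ) (x : K) :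
    repCc K ψ χ g f x = (χ g.t : ℂ) * ψ (g.s * x) * f (x * (g.t : K)) := rfl

/-- The one-dimensional `TS`-module `ℂ_χ` on which `S` acts trivially and `x_λ` by `χ(λ)`. -/
def chiRep (χ : Kˣ →* ℂˣ) : Rep K ℂ where
  toFun g := (χ g.t : ℂ) • LinearMap.id
  map_one' := by
    apply LinearMap.ext; intro c
    simp
  map_mul' g h := by
    apply LinearMap.ext; intro c
    simp only [mul_t, map_mul, LinearMap.smul_apply, LinearMap.id_apply, Module.End.mul_apply,
      Units.val_mul, smul_eq_mul]
    ring

/-- `C_c^∞(k)`: locally constant, compactly supported functions on `k`. -/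
def CcK : Submodule ℂ (K → ℂ) where
  carrier := {f | IsLocallyConstant f ∧ HasCompactSupport f}
  zero_mem' := ⟨IsLocallyConstant.const 0, by
    rw [hasCompactSupport_def]
    simp⟩
  add_mem' {a b} ha hb := ⟨ha.1.comp₂ hb.1 (· + ·), ha.2.add hb.2⟩
  smul_mem' c f hf := by
    refine ⟨?_, hf.2.mono (Function.support_const_smul_subset c f)⟩
    exact hf.1.comp (fun z => c * z)

@[simp] lemma mem_CcK (f : K → ℂ) :
    f ∈ CcK K ↔ IsLocallyConstant f ∧ HasCompactSupport f := Iff.rfl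

/-- `𝕊 = C_c^∞(k^×)`: locally constant, compactly supported functions on `k^×`. -/
def SSx : Submodule ℂ (Kˣ → ℂ) where
  carrier := {f | IsLocallyConstant f ∧ HasCompactSupport f}
  zero_mem' := ⟨IsLocallyConstant.const 0, by
    rw [hasCompactSupport_def]
    simp⟩
  add_mem' {a b} ha hb := ⟨ha.1.comp₂ hb.1 (· + ·), ha.2.add hb.2⟩
  smul_mem' c f hf := by
    refine ⟨?_, hf.2.mono (Function.support_const_smul_subset c f)⟩
    exact hf.1.comp (fun z => c * z)

@[simp] lemma mem_SSx (f : Kˣ → ℂ) :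
    f ∈ SSx K ↔ IsLocallyConstant f ∧ HasCompactSupport f := Iff.rfl

/-- `C_b^∞(k^×)`: locally constant functions on `k^×` whose support has compact closure
in `k`. -/
def Cb : Submodule ℂ (Kˣ → ℂ) where
  carrier := {f | IsLocallyConstant f ∧
    IsCompact (closure (((↑) : Kˣ → K) '' Function.support f))}
  zero_mem' := ⟨IsLocallyConstant.const 0, by simp⟩
  add_mem' {a b} ha hb := by
    refine ⟨ha.1.comp₂ hb.1 (· + ·), ?_⟩
    refine IsCompact.of_isClosed_subset (ha.2.union hb.2) isClosed_closure ?_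
    refine closure_minimal ?_ (ha.2.isClosed.union hb.2.isClosed)
    refine (Set.image_mono (Function.support_add _ _)).trans ?_
    rw [Set.image_union]
    exact Set.union_subset_union subset_closure subset_closure
  smul_mem' c f hf := by
    refine ⟨hf.1.comp (fun z => c * z), ?_⟩
    refine IsCompact.of_isClosed_subset hf.2 isClosed_closure ?_
    refine closure_mono ?_
    exact Set.image_mono (Function.support_const_smul_subset c f)

@[simp] lemma mem_Cb (f : Kˣ → ℂ) :
    f ∈ Cb K ↔ IsLocallyConstant f ∧
      IsCompact (closure (((↑) : Kˣ → K) '' Function.support f)) := Iff.rfl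

variable {K}

lemma SSx_invariant (ψ : AddChar K ℂ) (hψlc : IsLocallyConstant (⇑ψ)) :
    GRep.Invariant (repCx K ψ) (SSx K) := by
  rintro g f hf
  rw [mem_SSx] at hf ⊢
  obtain ⟨hlc, hcs⟩ := hf
  have heq : repCx K ψ g f
      = (fun x : Kˣ => ψ (g.s * (x : K))) * (f ∘ (Homeomorph.mulRight g.t)) := rfl
  constructor
  · rw [heq]
    refine IsLocallyConstant.mul ?_ ?_
    · exact hψlc.comp_continuous (continuous_const.mul Units.continuous_val)
    · exact hlc.comp_continuous (Homeomorph.mulRight g.t).continuous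
  · rw [heq]
    exact (hcs.comp_homeomorph (Homeomorph.mulRight g.t)).mul_left

lemma CcK_invariant (ψ : AddChar K ℂ) (hψlc : IsLocallyConstant (⇑ψ)) (χ : Kˣ →* ℂˣ) :
    GRep.Invariant (repCc K ψ χ) (CcK K) := by
  rintro g f hf
  rw [mem_CcK] at hf ⊢
  obtain ⟨hlc, hcs⟩ := hf
  have hne : ((g.t : Kˣ) : K) ≠ 0 := g.t.ne_zero
  have heq : repCc K ψ χ g f
      = (fun x : K => (χ g.t : ℂ) * ψ (g.s * x)) * (f ∘ (Homeomorph.mulRight₀ (g.t : K) hne)) :=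
    rfl
  constructor
  · rw [heq]
    refine IsLocallyConstant.mul ?_ ?_
    · exact ((hψlc.comp_continuous (continuous_const.mul continuous_id)).comp
        (fun z => (χ g.t : ℂ) * z))
    · exact hlc.comp_continuous (Homeomorph.mulRight₀ (g.t : K) hne).continuous
  · rw [heq]
    exact (hcs.comp_homeomorph (Homeomorph.mulRight₀ (g.t : K) hne)).mul_left

/-- The `TS`-module `𝕊 = C_c^∞(k^×)`. -/
def SRep (ψ : AddChar K ℂ) (hψlc : IsLocallyConstant (⇑ψ)) : Rep K ↥(SSx K) :=
  GRep.sub (repCx K ψ) (SSx_invariant ψ hψlc)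

/-- The `TS`-module `𝔼[χ]`, i.e. `C_c^∞(k)` with the `χ`-twisted action. -/
def ERep (ψ : AddChar K ℂ) (hψlc : IsLocallyConstant (⇑ψ)) (χ : Kˣ →* ℂˣ) : Rep K ↥(CcK K) :=
  GRep.sub (repCc K ψ χ) (CcK_invariant ψ hψlc χ)

/-- The `TS`-module `𝕊^s`, a direct sum of `s` copies of `𝕊`. -/
def SRepPow (ψ : AddChar K ℂ) (hψlc : IsLocallyConstant (⇑ψ)) (s : ℕ) :
    Rep K (Fin s → ↥(SSx K)) where
  toFun g := LinearMap.pi fun i => (SRep ψ hψlc g).comp (LinearMap.proj i)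
  map_one' := by
    apply LinearMap.ext; intro v; funext i
    simp
  map_mul' g h := by
    apply LinearMap.ext; intro v; funext i
    simp [map_mul]

/-- The submodule `E` of `C_b^∞(k^×)` consisting of functions which are `χ`-eigenvectors
modulo `𝕊`; the quotient `E/𝕊` is the `χ`-eigenspace of `C_b^∞(k^×)/𝕊`. -/
def quotEigen (ψ : AddChar K ℂ) (χ : Kˣ →* ℂˣ) : Submodule ℂ (Kˣ → ℂ) where
  carrier := {f | f ∈ Cb K ∧ ∀ u : Kˣ, repCx K ψ (Aff.xT u) f - (χ u : ℂ) • f ∈ SSx K}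
  zero_mem' := ⟨(Cb K).zero_mem, fun u => by simpa using (SSx K).zero_mem⟩
  add_mem' {a b} ha hb := by
    refine ⟨(Cb K).add_mem ha.1 hb.1, fun u => ?_⟩
    rw [map_add, smul_add, add_sub_add_comm]
    exact (SSx K).add_mem (ha.2 u) (hb.2 u)
  smul_mem' c f hf := by
    refine ⟨(Cb K).smul_mem c hf.1, fun u => ?_⟩
    rw [map_smul, smul_comm, ← smul_sub]
    exact (SSx K).smul_mem c (hf.2 u)

/-- Evaluation at `0 ∈ k`, realizing the quotient map `𝔼[χ] → ℂ_χ` with kernel `𝕊`. -/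
def ev0 : ↥(CcK K) →ₗ[ℂ] ℂ where
  toFun f := (f : K → ℂ) 0
  map_add' f g := rfl
  map_smul' c f := rfl

end Concrete

/-! ### The diagonal torus in GL(2). -/

section GL2

variable {K : Type*} [Field K]

/-- The diagonal element `diag(a, b)` of `GL(2, K)`. -/
def diagGL (a b : Kˣ) : Matrix.GeneralLinearGroup (Fin 2) K where
  val := Matrix.diagonal ![(a : K), (b : K)]
  inv := Matrix.diagonal ![((a : K))⁻¹, ((b : K))⁻¹]
  val_inv := by
    ext i j
    fin_cases i <;> fin_cases j <;>
      simp [Matrix.mul_apply, Fin.sum_univ_two, Matrix.diagonal, Matrix.one_apply,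
        a.ne_zero, b.ne_zero]
  inv_val := by
    ext i j
    fin_cases i <;> fin_cases j <;>
      simp [Matrix.mul_apply, Fin.sum_univ_two, Matrix.diagonal, Matrix.one_apply,
        a.ne_zero, b.ne_zero]

end GL2

/-!
Twisting by `χ⁻¹` turns eigenspaces and coinvariants for `χ` into invariants and coinvariants of
`T ≅ kˣ`. The units of norm one form a compact subgroup `T₀`, over which averaging makes invariants
and coinvariants coincide and exact, and a uniformizer `ϖ` generates the rest of `T`. Hence
`dim V^T - dim V_T` is the index of `ϖ - 1` on `V^{T₀}`, which is additive in short exact sequences,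
and it is enough to treat an irreducible module.

If `S` acts trivially, irreducibility under the commutative group `T` makes the index zero. If not,
Fourier analysis on `S` produces a nonzero Whittaker functional; the resulting Kirillov model maps
the module to `𝕊`, which is irreducible, so the module is `𝕊`. There the `T₀`-invariants have as a
basis the functions equal to `χ` on one shell `‖x‖ = ‖ϖ‖ ^ n`, and `ϖ` shifts this basis: the index
is that of a bilateral shift minus one, namely `-1`.
-/

/-! ### The index of a linear map and its additivity -/

section Index

variable {k : Type*} [Field k]
variable {A B C : Type*} [AddCommGroup A] [Module k A] [AddCommGroup B] [Module k B]
  [AddCommGroup C] [Module k C]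

/-- An algebraic Fredholm map of index `d`, in Mathlib's convention
`index = dim ker - dim coker`; finiteness is recorded so that the index is not a junk value. -/
structure MapHasIndex (f : A →ₗ[k] B) (d : ℤ) : Prop where
  finite_ker : FiniteDimensional k (LinearMap.ker f)
  finite_coker : FiniteDimensional k (B ⧸ LinearMap.range f)
  index_eq : f.index = d

lemma finiteDimensional_of_exact (f : A →ₗ[k] B) (g : B →ₗ[k] C) (h : Function.Exact f g)
    [FiniteDimensional k A] [FiniteDimensional k C] : FiniteDimensional k B :=
  Module.Finite.of_exact (g := g.rangeRestrict)
    (fun b => Iff.trans (by simp [Subtype.ext_iff]) (h b)) g.surjective_rangeRestrict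

lemma map_mem_ker_of_comp_eq {i : A →ₗ[k] B} {a : A →ₗ[k] A} {b : B →ₗ[k] B}
    (h : i ∘ₗ a = b ∘ₗ i) : ∀ x ∈ LinearMap.ker a, i x ∈ LinearMap.ker b := fun x hx =>
  (LinearMap.congr_fun h x).symm.trans ((congrArg i hx).trans (map_zero i))

lemma range_le_comap_of_comp_eq {i : A →ₗ[k] B} {a : A →ₗ[k] A} {b : B →ₗ[k] B}
    (h : i ∘ₗ a = b ∘ₗ i) : LinearMap.range a ≤ (LinearMap.range b).comap i := by
  rintro _ ⟨x, rfl⟩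
  exact ⟨i x, (LinearMap.congr_fun h x).symm⟩

variable {a : A →ₗ[k] A} {b : B →ₗ[k] B} {c : C →ₗ[k] C} {i : A →ₗ[k] B} {p : B →ₗ[k] C}

lemma exact_restrict_ker (hi : Function.Injective i) (hip : Function.Exact i p)
    (hab : i ∘ₗ a = b ∘ₗ i) (hker : ∀ x ∈ LinearMap.ker a, i x ∈ LinearMap.ker b)
    (hker' : ∀ x ∈ LinearMap.ker b, p x ∈ LinearMap.ker c) :
    Function.Exact (i.restrict hker) (p.restrict hker') := by
  rintro ⟨x, hx⟩
  constructor
  · intro h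
    obtain ⟨y, rfl⟩ := (hip x).1 (congrArg Subtype.val h)
    have hy : i (a y) = 0 := (LinearMap.congr_fun hab y).trans hx
    exact ⟨⟨y, hi (hy.trans (map_zero i).symm)⟩, rfl⟩
  · rintro ⟨y, hy⟩
    rw [← hy]
    exact Subtype.ext ((hip _).2 ⟨y, rfl⟩)

lemma exact_mapQ_range (hp : Function.Surjective p) (hip : Function.Exact i p)
    (hbc : p ∘ₗ b = c ∘ₗ p) (hran : LinearMap.range a ≤ (LinearMap.range b).comap i)
    (hran' : LinearMap.range b ≤ (LinearMap.range c).comap p) :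
    Function.Exact (Submodule.mapQ _ _ i hran) (Submodule.mapQ _ _ p hran') := by
  intro x
  obtain ⟨x, rfl⟩ := Submodule.mkQ_surjective _ x
  constructor
  · intro h
    obtain ⟨z, hz⟩ : p x ∈ LinearMap.range c := (Submodule.Quotient.mk_eq_zero _).1 h
    obtain ⟨y, rfl⟩ := hp z
    have hxy : p (x - b y) = 0 := by
      rw [map_sub, ← hz, sub_eq_zero]
      exact (LinearMap.congr_fun hbc y).symm
    obtain ⟨w, hw⟩ := (hip _).1 hxy
    refine ⟨Submodule.Quotient.mk w, (Submodule.Quotient.eq _).2 ⟨-y, ?_⟩⟩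
    simp [hw]
  · rintro ⟨y, hy⟩
    obtain ⟨y, rfl⟩ := Submodule.mkQ_surjective _ y
    rw [← hy]
    exact congrArg (Submodule.mkQ _) ((hip _).2 ⟨y, rfl⟩)

lemma MapHasIndex.of_exact {d e : ℤ} (ha : MapHasIndex a d) (hc : MapHasIndex c e)
    (hi : Function.Injective i) (hp : Function.Surjective p) (hip : Function.Exact i p)
    (hab : i ∘ₗ a = b ∘ₗ i) (hbc : p ∘ₗ b = c ∘ₗ p) : MapHasIndex b (d + e) := by
  have := ha.finite_ker
  have := ha.finite_coker
  have := hc.finite_ker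
  have := hc.finite_coker
  have hker := map_mem_ker_of_comp_eq hab
  have hker' := map_mem_ker_of_comp_eq hbc
  have hran := range_le_comap_of_comp_eq hab
  have hran' := range_le_comap_of_comp_eq hbc
  have hsurj : Function.Surjective (Submodule.mapQ _ _ p hran') := fun x => by
    obtain ⟨x, rfl⟩ := Submodule.mkQ_surjective _ x
    obtain ⟨y, rfl⟩ := hp x
    exact ⟨Submodule.Quotient.mk y, rfl⟩
  have ker_exact := exact_restrict_ker hi hip hab hker hker'
  have coker_exact := exact_mapQ_range hp hip hbc hran hran'
  let δ := SnakeLemma.δ' a b c i p hip i p hip hab hbc (LinearMap.ker c).subtype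
    (LinearMap.exact_subtype_ker_map c) (LinearMap.range a).mkQ
    (LinearMap.exact_map_mkQ_range a) hp hi
  have exact_right : Function.Exact (p.restrict hker') δ :=
    SnakeLemma.exact_δ'_right a b c i p hip i p hip hab hbc _ (LinearMap.exact_subtype_ker_map b)
      _ _ _ _ hp hi _ rfl Subtype.val_injective
  have exact_left : Function.Exact δ (Submodule.mapQ _ _ i hran) :=
    SnakeLemma.exact_δ'_left a b c i p hip i p hip hab hbc _ _ _ _ _
      (LinearMap.exact_map_mkQ_range b) hp hi _ rfl (Submodule.mkQ_surjective _)
  have finite_ker := finiteDimensional_of_exact _ _ ker_exact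
  have finite_coker := finiteDimensional_of_exact _ _ coker_exact
  have dims := Module.sum_neg_one_pow_finrank_eq_zero_of_exact_six _ _ δ _ _
    (fun x y h => Subtype.ext (hi (congrArg Subtype.val h)))
    ker_exact exact_right exact_left coker_exact hsurj
  refine ⟨finite_ker, finite_coker, ?_⟩
  rw [← ha.index_eq, ← hc.index_eq]
  simp only [LinearMap.index_eq_finrank_sub]
  lia

end Index

/-! ### Invariants and coinvariants: averaging and the index -/

section Averaging

variable {k H V : Type*} [Field k] [AddCommGroup V] [Module k V]

section Group

variable [Group H] (τ : Representation k H V)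

/-- The stabilizer of a vector in a representation. -/
def repStabilizer (v : V) : Subgroup H where
  carrier := {h | τ h v = v}
  one_mem' := by simp
  mul_mem' {g h} hg hh := by
    change τ (g * h) v = v
    rw [map_mul, Module.End.mul_apply, show τ h v = v from hh, show τ g v = v from hg]
  inv_mem' {g} hg := by
    change τ g⁻¹ v = v
    nth_rewrite 1 [← show τ g v = v from hg]
    exact τ.inv_self_apply g v

@[simp] lemma mem_repStabilizer {v : V} {h : H} : h ∈ repStabilizer τ v ↔ τ h v = v := Iff.rfl

/-- The mean of a vector over representatives of the cosets of a finite-index subgroup `L`. It is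
independent of the representatives, and fixed by the group, only on vectors fixed by `L`. -/
def cosetAverage (L : Subgroup H) [L.FiniteIndex] : V →ₗ[k] V :=
  let _ := L.fintypeQuotientOfFiniteIndex
  (L.index : k)⁻¹ • ∑ q : H ⧸ L, τ q.out

/-- The representation `τ ⊗ θ⁻¹`, whose invariants and coinvariants are the `θ`-eigenspace and the
`θ`-coinvariants of `τ`. -/
def twist (θ : H →* kˣ) : Representation k H V where
  toFun h := ((θ h)⁻¹ : kˣ) • τ h
  map_one' := by simp
  map_mul' g h := by
    ext v
    simp only [map_mul, mul_inv_rev, Module.End.mul_apply, LinearMap.smul_apply, map_smul,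
      smul_smul, Units.smul_def, Units.val_mul]

variable {τ}

@[simp] lemma twist_apply (θ : H →* kˣ) (h : H) (v : V) :
    twist τ θ h v = ((θ h)⁻¹ : kˣ) • τ h v := rfl

lemma mem_invariants_twist {θ : H →* kˣ} {v : V} :
    v ∈ (twist τ θ).invariants ↔ ∀ h, τ h v = (θ h : k) • v := by
  simp only [Representation.mem_invariants, twist_apply, inv_smul_eq_iff]
  rfl

lemma coinvariantsKer_twist (θ : H →* kˣ) :
    Representation.Coinvariants.ker (twist τ θ) =
      Submodule.span k {w | ∃ h x, w = τ h x - (θ h : k) • x} := by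
  refine le_antisymm (Submodule.span_le.2 ?_) (Submodule.span_le.2 ?_)
  · rintro _ ⟨⟨h, x⟩, rfl⟩
    have : twist τ θ h x - x = ((θ h)⁻¹ : kˣ) • (τ h x - (θ h : k) • x) := by
      rw [smul_sub, twist_apply, ← Units.smul_def, inv_smul_smul]
    change twist τ θ h x - x ∈ _
    rw [this]
    exact Submodule.smul_mem _ _ (Submodule.subset_span ⟨h, x, rfl⟩)
  · rintro _ ⟨h, x, rfl⟩
    have : τ h x - (θ h : k) • x = θ h • (twist τ θ h x - x) := by
      rw [smul_sub, twist_apply, smul_inv_smul, ← Units.smul_def]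
    rw [this]
    exact Submodule.smul_mem _ _ (Representation.Coinvariants.sub_mem_ker h x)

lemma cosetAverage_apply (L : Subgroup H) [L.FiniteIndex] [Fintype (H ⧸ L)] (v : V) :
    cosetAverage τ L v = (L.index : k)⁻¹ • ∑ q : H ⧸ L, τ q.out v := by
  simp only [cosetAverage, LinearMap.smul_apply, LinearMap.sum_apply]
  congr!

lemma coinvariantsKer_comp_le {H' : Type*} [Group H'] (f : H' →* H) :
    Representation.Coinvariants.ker (τ.comp f) ≤ Representation.Coinvariants.ker τ := by
  refine Submodule.span_le.2 ?_
  rintro _ ⟨⟨h, v⟩, rfl⟩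
  exact Representation.Coinvariants.sub_mem_ker (f h) v

lemma coinvariantsKer_comp_subtype_mono {M M' : Subgroup H} (h : M ≤ M') :
    Representation.Coinvariants.ker (τ.comp M.subtype) ≤
      Representation.Coinvariants.ker (τ.comp M'.subtype) :=
  coinvariantsKer_comp_le (τ := τ.comp M'.subtype) (Subgroup.inclusion h)

lemma exists_mem_coinvariantsKer_comp_subtype {M : ℕ → Subgroup H} (hM : Monotone M)
    (hexhaust : ∀ h, ∃ k, h ∈ M k) {v : V} (hv : v ∈ Representation.Coinvariants.ker τ) :
    ∃ k, v ∈ Representation.Coinvariants.ker (τ.comp (M k).subtype) := by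
  have hdir : Directed (· ≤ ·) fun k => Representation.Coinvariants.ker (τ.comp (M k).subtype) :=
    Monotone.directed_le fun _ _ hkl => coinvariantsKer_comp_subtype_mono (hM hkl)
  refine (Submodule.mem_iSup_of_directed _ hdir).1 (Submodule.span_le.2 ?_ hv)
  rintro _ ⟨⟨h, w⟩, rfl⟩
  obtain ⟨k, hk⟩ := hexhaust h
  exact Submodule.mem_iSup_of_mem k
    (Representation.Coinvariants.sub_mem_ker (ρ := τ.comp (M k).subtype) ⟨h, hk⟩ w)

lemma cosetAverage_mem (L : Subgroup H) [L.FiniteIndex] {U : Submodule k V}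
    (hU : ∀ h, ∀ v ∈ U, τ h v ∈ U) {v : V} (hv : v ∈ U) : cosetAverage τ L v ∈ U := by
  let _ := L.fintypeQuotientOfFiniteIndex
  rw [cosetAverage_apply]
  exact U.smul_mem _ (U.sum_mem fun q _ => hU _ v hv)

lemma apply_out_mk {L : Subgroup H} {v : V} (hv : L ≤ repStabilizer τ v) (h : H) :
    τ (h : H ⧸ L).out v = τ h v := by
  obtain ⟨l, hl⟩ := QuotientGroup.mk_out_eq_mul L h
  rw [hl, map_mul, Module.End.mul_apply, hv l.2]

lemma cosetAverage_mem_invariants {L : Subgroup H} [L.FiniteIndex] {v : V}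
    (hv : L ≤ repStabilizer τ v) : cosetAverage τ L v ∈ τ.invariants := by
  let _ := L.fintypeQuotientOfFiniteIndex
  intro g
  rw [cosetAverage_apply, map_smul, map_sum]
  congr 1
  refine Fintype.sum_equiv (MulAction.toPerm g) _ _ fun q => ?_
  rw [← Module.End.mul_apply, ← map_mul]
  nth_rewrite 2 [← q.out_eq']
  exact (apply_out_mk hv (g * q.out)).symm

variable [CharZero k]

lemma cosetAverage_of_mem_invariants (L : Subgroup H) [L.FiniteIndex] {v : V}
    (hv : v ∈ τ.invariants) : cosetAverage τ L v = v := by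
  let _ := L.fintypeQuotientOfFiniteIndex
  rw [cosetAverage_apply, Finset.sum_congr rfl fun q _ => hv q.out, Finset.sum_const,
    Finset.card_univ, ← Nat.card_eq_fintype_card, ← Nat.cast_smul_eq_nsmul k,
    ← Subgroup.index, inv_smul_smul₀ (Nat.cast_ne_zero.2 Subgroup.FiniteIndex.index_ne_zero)]

lemma sub_cosetAverage_mem_coinvariantsKer (L : Subgroup H) [L.FiniteIndex] (v : V) :
    v - cosetAverage τ L v ∈ Representation.Coinvariants.ker τ := by
  let _ := L.fintypeQuotientOfFiniteIndex
  have hsum : cosetAverage τ L v - v = (L.index : k)⁻¹ • ∑ q : H ⧸ L, (τ q.out v - v) := by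
    rw [cosetAverage_apply, Finset.sum_sub_distrib, smul_sub, Finset.sum_const, Finset.card_univ,
      ← Nat.card_eq_fintype_card, ← Nat.cast_smul_eq_nsmul k, ← Subgroup.index,
      inv_smul_smul₀ (Nat.cast_ne_zero.2 Subgroup.FiniteIndex.index_ne_zero)]
  rw [← neg_sub, hsum]
  exact neg_mem (Submodule.smul_mem _ _
    (Submodule.sum_mem _ fun q _ => Representation.Coinvariants.sub_mem_ker q.out v))

end Group

section CommGroup

variable [CommGroup H] {τ : Representation k H V}

lemma apply_apply_comm (g h : H) (v : V) : τ g (τ h v) = τ h (τ g v) := by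
  rw [← Module.End.mul_apply, ← map_mul, mul_comm, map_mul, Module.End.mul_apply]

lemma cosetAverage_apply_sub_self (L : Subgroup H) [L.FiniteIndex] {v : V}
    (hv : L ≤ repStabilizer τ v) (g : H) : cosetAverage τ L (τ g v - v) = 0 := by
  let _ := L.fintypeQuotientOfFiniteIndex
  have hcomm : cosetAverage τ L (τ g v) = τ g (cosetAverage τ L v) := by
    simp only [cosetAverage_apply, map_smul, map_sum, apply_apply_comm g]
  rw [map_sub, hcomm, cosetAverage_mem_invariants hv g, sub_self]

lemma exists_cosetAverage_eq_zero (hτ : ∀ v, (repStabilizer τ v).FiniteIndex) {v : V}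
    (hv : v ∈ Representation.Coinvariants.ker τ) :
    ∃ L : Subgroup H, L.FiniteIndex ∧ ∀ L' ≤ L, ∀ _ : L'.FiniteIndex, cosetAverage τ L' v = 0 := by
  induction hv using Submodule.span_induction with
  | mem x hx =>
    obtain ⟨⟨g, w⟩, rfl⟩ := hx
    exact ⟨_, hτ w, fun L' hL' _ => cosetAverage_apply_sub_self L' hL' g⟩
  | zero => exact ⟨⊤, inferInstance, fun L' _ _ => map_zero _⟩
  | add x y _ _ hx hy =>
    obtain ⟨L₁, _, h₁⟩ := hx
    obtain ⟨L₂, _, h₂⟩ := hy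
    refine ⟨L₁ ⊓ L₂, inferInstance, fun L' hL' _ => ?_⟩
    rw [map_add, h₁ L' (hL'.trans inf_le_left) ‹_›, h₂ L' (hL'.trans inf_le_right) ‹_›, add_zero]
  | smul c x _ hx =>
    obtain ⟨L, hL, h⟩ := hx
    exact ⟨L, hL, fun L' hL' hfin => by rw [map_smul, h L' hL' hfin, smul_zero]⟩

lemma finite_of_forall_le_ker (D : Subgroup (H →* kˣ)) (N : Subgroup H) [N.FiniteIndex]
    (hND : ∀ θ ∈ D, N ≤ θ.ker) : Finite D := by
  refine Finite.of_injective (β := H ⧸ N →* kˣ)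
    (fun θ => QuotientGroup.lift N θ.1 fun _ hx => hND θ.1 θ.2 hx) fun θ θ' h => ?_
  ext x
  exact congrArg Units.val (DFunLike.congr_fun h (x : H ⧸ N))

lemma finiteIndex_repStabilizer_twist {θ : H →* kˣ} [θ.ker.FiniteIndex] {v : V}
    (hv : (repStabilizer τ v).FiniteIndex) : (repStabilizer (twist τ θ) v).FiniteIndex := by
  have hle : repStabilizer τ v ⊓ θ.ker ≤ repStabilizer (twist τ θ) v := by
    rintro h ⟨hτ, hθ⟩
    rw [mem_repStabilizer, twist_apply, MonoidHom.mem_ker.1 hθ, inv_one, one_smul]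
    exact hτ
  exact Subgroup.finiteIndex_of_le hle

variable [CharZero k]

lemma isCompl_invariants_coinvariantsKer (hτ : ∀ v, (repStabilizer τ v).FiniteIndex) :
    IsCompl τ.invariants (Representation.Coinvariants.ker τ) := by
  refine ⟨Submodule.disjoint_def.2 fun v hinv hker => ?_, codisjoint_iff_le_sup.2 fun v _ => ?_⟩
  · obtain ⟨L, hL, havg⟩ := exists_cosetAverage_eq_zero hτ hker
    rw [← cosetAverage_of_mem_invariants L hinv, havg L le_rfl hL]
  · have := hτ v
    exact Submodule.mem_sup.2 ⟨_, cosetAverage_mem_invariants le_rfl, _,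
      sub_cosetAverage_mem_coinvariantsKer (repStabilizer τ v) v, add_sub_cancel _ _⟩

/-- Fourier inversion on `H ⧸ N`. -/
lemma card_smul_eq_sum_cosetAverage_twist (D : Subgroup (H →* kˣ)) [Fintype D]
    (N : Subgroup H) [N.FiniteIndex] (hDN : ∀ h ∉ N, ∃ θ ∈ D, θ h ≠ 1) {v : V}
    (hv : N ≤ repStabilizer τ v) (hND : ∀ θ ∈ D, N ≤ θ.ker) :
    (Fintype.card D : k) • v = (N.index : k) • ∑ θ : D, cosetAverage (twist τ θ.1) N v := by
  let _ := N.fintypeQuotientOfFiniteIndex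
  have orthogonality (h : H) :
      ∑ θ : D, (((θ.1 h)⁻¹ : kˣ) : k) = if h ∈ N then (Fintype.card D : k) else 0 := by
    let evalAt : D →* k := (Units.coeHom k).comp (((MonoidHom.eval h).comp D.subtype)⁻¹)
    split_ifs with hh
    · have hone (θ : D) : θ.1 h = 1 := hND θ.1 θ.2 hh
      simp [hone]
    · obtain ⟨θ, hθ, hne⟩ := hDN h hh
      refine sum_hom_units_eq_zero evalAt fun heval => hne ?_
      have := DFunLike.congr_fun heval ⟨θ, hθ⟩
      simpa [evalAt] using this
  have hcoset (q : H ⧸ N) : q.out ∈ N ↔ q = ((1 : H) : H ⧸ N) := by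
    nth_rewrite 2 [← q.out_eq']
    rw [eq_comm]
    exact (QuotientGroup.eq.trans (by simp)).symm
  simp only [cosetAverage_apply, twist_apply, Units.smul_def, ← Finset.smul_sum]
  rw [smul_inv_smul₀ (Nat.cast_ne_zero.2 Subgroup.FiniteIndex.index_ne_zero), Finset.sum_comm]
  simp only [← Finset.sum_smul, orthogonality, hcoset, ite_smul, zero_smul, Finset.sum_ite_eq',
    Finset.mem_univ, if_true]
  rw [apply_out_mk hv, map_one, Module.End.one_apply]

lemma cosetAverage_eq_zero (hτ : ∀ v, (repStabilizer τ v).FiniteIndex) {L : Subgroup H}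
    [L.FiniteIndex] {v : V} (hL : L ≤ repStabilizer τ v)
    (hv : v ∈ Representation.Coinvariants.ker τ) : cosetAverage τ L v = 0 := by
  refine Submodule.disjoint_def.1 (isCompl_invariants_coinvariantsKer hτ).disjoint _
    (cosetAverage_mem_invariants hL) ?_
  rw [← sub_sub_cancel v (cosetAverage τ L v)]
  exact sub_mem hv (sub_cosetAverage_mem_coinvariantsKer L v)

lemma le_repStabilizer_of_characters (hτ : ∀ v, (repStabilizer τ v).FiniteIndex)
    (D : Subgroup (H →* kˣ)) (N M : Subgroup H) [N.FiniteIndex]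
    (hND : ∀ θ ∈ D, N ≤ θ.ker) (hDN : ∀ h ∉ N, ∃ θ ∈ D, θ h ≠ 1) {v : V}
    (hv : N ≤ repStabilizer τ v)
    (hM : ∀ θ ∈ D, M ≤ θ.ker ∨ v ∈ Representation.Coinvariants.ker (twist τ θ)) :
    M ≤ repStabilizer τ v := by
  have := finite_of_forall_le_ker D N hND
  have := Fintype.ofFinite D
  have hNstab (θ : H →* kˣ) (hθ : θ ∈ D) : N ≤ repStabilizer (twist τ θ) v := fun h hh => by
    rw [mem_repStabilizer, twist_apply, MonoidHom.mem_ker.1 (hND θ hθ hh), inv_one, one_smul]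
    exact hv hh
  have fixed (h : H) (hh : h ∈ M) (θ : H →* kˣ) (hθ : θ ∈ D) :
      τ h (cosetAverage (twist τ θ) N v) = cosetAverage (twist τ θ) N v := by
    have hinv := cosetAverage_mem_invariants (hNstab θ hθ)
    obtain hker | hcoinv := hM θ hθ
    · rw [mem_invariants_twist.1 hinv h, MonoidHom.mem_ker.1 (hker hh), Units.val_one, one_smul]
    · have : θ.ker.FiniteIndex := Subgroup.finiteIndex_of_le (hND θ hθ)
      rw [cosetAverage_eq_zero (fun w => finiteIndex_repStabilizer_twist (hτ w)) (hNstab θ hθ)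
        hcoinv, map_zero]
  intro h hh
  have inversion := card_smul_eq_sum_cosetAverage_twist D N hDN hv hND
  have hcard : (Fintype.card D : k) ≠ 0 := Nat.cast_ne_zero.2 Fintype.card_ne_zero
  refine smul_right_injective V hcard ?_
  change (Fintype.card D : k) • τ h v = (Fintype.card D : k) • v
  rw [← map_smul, inversion, map_smul, map_sum]
  exact congrArg _ (Finset.sum_congr rfl fun θ _ => fixed h hh θ.1 θ.2)

end CommGroup

end Averaging

section RepIndex

variable {k H V W X : Type*} [Field k] [AddCommGroup V] [Module k V] [AddCommGroup W] [Module k W]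
  [AddCommGroup X] [Module k X]

/-- The invariants and the coinvariants of `τ` are finite-dimensional, and the difference
`dim (invariants) - dim (coinvariants)` is `d`. -/
structure RepHasIndex [Group H] (τ : Representation k H V) (d : ℤ) : Prop where
  finite_invariants : FiniteDimensional k τ.invariants
  finite_coinvariants : FiniteDimensional k (V ⧸ Representation.Coinvariants.ker τ)
  finrank_sub_finrank : (Module.finrank k τ.invariants : ℤ)
    - Module.finrank k (V ⧸ Representation.Coinvariants.ker τ) = d

section Group

variable [Group H] {τ : Representation k H V} {σ : Representation k H W}
  {υ : Representation k H X}

lemma RepHasIndex.congr {d : ℤ} (e : V ≃ₗ[k] W) (he : ∀ h v, e (τ h v) = σ h (e v))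
    (hτ : RepHasIndex τ d) : RepHasIndex σ d := by
  have hinv : τ.invariants.map (e : V →ₗ[k] W) = σ.invariants := by
    ext w
    rw [Submodule.mem_map_equiv]
    refine forall_congr' fun h => ?_
    rw [← e.injective.eq_iff, he, e.apply_symm_apply]
  have hker : (Representation.Coinvariants.ker τ).map (e : V →ₗ[k] W) =
      Representation.Coinvariants.ker σ := by
    rw [Representation.Coinvariants.ker, Representation.Coinvariants.ker, Submodule.map_span,
      ← Set.range_comp]
    congr 1
    refine ((Equiv.prodCongrRight fun _ => e.toEquiv).surjective.range_comp _ ▸ ?_)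
    congr 1
    ext ⟨h, v⟩
    simp [he]
  let einv := (e.submoduleMap τ.invariants).trans (LinearEquiv.ofEq _ _ hinv)
  let ecoinv := Submodule.Quotient.equiv _ _ e hker
  have := hτ.finite_invariants
  have := hτ.finite_coinvariants
  refine ⟨Module.Finite.equiv einv, Module.Finite.equiv ecoinv, ?_⟩
  rw [← einv.finrank_eq, ← ecoinv.finrank_eq, hτ.finrank_sub_finrank]

variable (M : Subgroup H)

variable (τ) in
/-- The elements of a group acting trivially on the quotient of a representation by `U`. -/
def quotientActingTrivially (U : Submodule k V) : Subgroup H where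
  carrier := {h | ∀ v, τ h v - v ∈ U}
  one_mem' := by simp
  mul_mem' {g h} hg hh v := by
    rw [← sub_add_sub_cancel _ (τ h v) v, map_mul]
    exact add_mem (hg (τ h v)) (hh v)
  inv_mem' {g} hg v := by
    have := hg (τ g⁻¹ v)
    rw [τ.self_inv_apply] at this
    exact (sub_mem_comm_iff).1 this

variable {M} {ϖ : H}

lemma mem_invariants_iff_of_sup_zpowers (hgen : M ⊔ Subgroup.zpowers ϖ = ⊤) {v : V} :
    v ∈ τ.invariants ↔ v ∈ Representation.invariants (τ.comp M.subtype) ∧ τ ϖ v = v := by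
  refine ⟨fun hv => ⟨fun m => hv m, hv ϖ⟩, fun ⟨hM, hϖ⟩ h => ?_⟩
  have hle : M ⊔ Subgroup.zpowers ϖ ≤ repStabilizer τ v :=
    sup_le (fun m hm => hM ⟨m, hm⟩) (Subgroup.zpowers_le.2 hϖ)
  exact hle (hgen ▸ Subgroup.mem_top h)

variable [M.Normal]

variable (τ M ϖ) in
/-- The operator `ϖ - 1` on the `M`-invariants. -/
def subOneOnInvariants :
    Representation.invariants (τ.comp M.subtype) →ₗ[k]
    Representation.invariants (τ.comp M.subtype) :=
  τ.toInvariants M ϖ - 1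

@[simp] lemma coe_subOneOnInvariants_apply (v : Representation.invariants (τ.comp M.subtype)) :
    (subOneOnInvariants τ M ϖ v : V) = τ ϖ v - v := rfl

lemma map_ker_subOneOnInvariants (hgen : M ⊔ Subgroup.zpowers ϖ = ⊤) :
    (LinearMap.ker (subOneOnInvariants τ M ϖ)).map (Submodule.subtype _) = τ.invariants := by
  ext v
  rw [mem_invariants_iff_of_sup_zpowers hgen]
  constructor
  · rintro ⟨w, hw, rfl⟩
    exact ⟨w.2, sub_eq_zero.1 (congrArg Subtype.val hw)⟩
  · rintro ⟨hM, hϖ⟩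
    exact ⟨⟨v, hM⟩, Subtype.ext (sub_eq_zero.2 hϖ), rfl⟩

lemma coinvariantsKer_le_sup (hgen : M ⊔ Subgroup.zpowers ϖ = ⊤)
    (hM : Codisjoint (Representation.invariants (τ.comp M.subtype))
      (Representation.Coinvariants.ker (τ.comp M.subtype))) :
    Representation.Coinvariants.ker τ ≤
      (LinearMap.range (subOneOnInvariants τ M ϖ)).map (Submodule.subtype _) ⊔
        Representation.Coinvariants.ker (τ.comp M.subtype) := by
  set U := (LinearMap.range (subOneOnInvariants τ M ϖ)).map (Submodule.subtype _) ⊔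
    Representation.Coinvariants.ker (τ.comp M.subtype)
  have hMU : M ≤ quotientActingTrivially τ U := fun m hm v =>
    Submodule.mem_sup_right (Representation.Coinvariants.sub_mem_ker (⟨m, hm⟩ : M) v)
  have hϖU : ϖ ∈ quotientActingTrivially τ U := fun v => by
    obtain ⟨p, hp, c, hc, rfl⟩ := Submodule.mem_sup.1 (hM.eq_top ▸ Submodule.mem_top (x := v))
    rw [map_add, add_sub_add_comm]
    exact add_mem (Submodule.mem_sup_left ⟨_, ⟨⟨p, hp⟩, rfl⟩, rfl⟩)
      (Submodule.mem_sup_right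
        (sub_mem (Representation.Coinvariants.le_comap_ker τ M ϖ hc) hc))
  have hle : M ⊔ Subgroup.zpowers ϖ ≤ quotientActingTrivially τ U :=
    sup_le hMU (Subgroup.zpowers_le.2 hϖU)
  refine Submodule.span_le.2 ?_
  rintro _ ⟨⟨h, v⟩, rfl⟩
  exact hle (hgen ▸ Subgroup.mem_top h) v

lemma range_subOneOnInvariants (hgen : M ⊔ Subgroup.zpowers ϖ = ⊤)
    (hM : IsCompl (Representation.invariants (τ.comp M.subtype))
      (Representation.Coinvariants.ker (τ.comp M.subtype))) :
    LinearMap.range (subOneOnInvariants τ M ϖ) =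
      (Representation.Coinvariants.ker τ).comap (Submodule.subtype _) := by
  refine le_antisymm ?_ fun v hv => ?_
  · rintro _ ⟨v, rfl⟩
    exact Representation.Coinvariants.sub_mem_ker ϖ v.1
  · obtain ⟨_, ⟨w, hw, rfl⟩, c, hc, hwc⟩ :=
      Submodule.mem_sup.1 (coinvariantsKer_le_sup hgen hM.codisjoint hv)
    have hcinv : c ∈ Representation.invariants (τ.comp M.subtype) := by
      rw [eq_sub_of_add_eq' hwc]
      exact sub_mem v.2 w.2
    have hczero : c = 0 := Submodule.disjoint_def.1 hM.disjoint c hcinv hc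
    rw [hczero, add_zero] at hwc
    rwa [← Subtype.ext hwc]

/-- The `M`-invariants are also the `M`-coinvariants, so the kernel and cokernel of `ϖ - 1` on them
are the invariants and coinvariants of `H = M ⟨ϖ⟩`. -/
lemma repHasIndex_iff (hgen : M ⊔ Subgroup.zpowers ϖ = ⊤)
    (hM : IsCompl (Representation.invariants (τ.comp M.subtype))
      (Representation.Coinvariants.ker (τ.comp M.subtype))) {d : ℤ} :
    RepHasIndex τ d ↔ MapHasIndex (subOneOnInvariants τ M ϖ) d := by
  let eker : LinearMap.ker (subOneOnInvariants τ M ϖ) ≃ₗ[k] τ.invariants :=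
    (Submodule.equivMapOfInjective _ (Submodule.subtype_injective _) _).trans
      (LinearEquiv.ofEq _ _ (map_ker_subOneOnInvariants hgen))
  let f := (Representation.Coinvariants.ker τ).mkQ ∘ₗ
    (Representation.invariants (τ.comp M.subtype)).subtype
  have hkerf : LinearMap.ker f = LinearMap.range (subOneOnInvariants τ M ϖ) := by
    rw [range_subOneOnInvariants hgen hM, LinearMap.ker_comp, Submodule.ker_mkQ]
  have hsurj : Function.Surjective f := fun x => by
    obtain ⟨v, rfl⟩ := Submodule.mkQ_surjective _ x
    obtain ⟨p, hp, c, hc, rfl⟩ :=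
      Submodule.mem_sup.1 (hM.codisjoint.eq_top ▸ Submodule.mem_top (x := v))
    refine ⟨⟨p, hp⟩, (Submodule.Quotient.eq _).2 ?_⟩
    change p - (p + c) ∈ _
    rw [sub_add_cancel_left]
    exact neg_mem (coinvariantsKer_comp_le M.subtype hc)
  let ecoker := (Submodule.quotEquivOfEq _ _ hkerf.symm).trans (f.quotKerEquivOfSurjective hsurj)
  have hindex : (subOneOnInvariants τ M ϖ).index = (Module.finrank k τ.invariants : ℤ)
      - Module.finrank k (V ⧸ Representation.Coinvariants.ker τ) := by
    rw [LinearMap.index_eq_finrank_sub, eker.finrank_eq, ecoker.finrank_eq]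
  constructor
  · rintro ⟨_, _, h⟩
    exact ⟨Module.Finite.equiv eker.symm, Module.Finite.equiv ecoker.symm, hindex.trans h⟩
  · rintro ⟨_, _, h⟩
    exact ⟨Module.Finite.equiv eker, Module.Finite.equiv ecoker, hindex.symm.trans h⟩

lemma map_mem_invariants {i : V →ₗ[k] W} (hi : ∀ h v, i (τ h v) = σ h (i v)) :
    ∀ v ∈ τ.invariants, i v ∈ σ.invariants := fun v hv h => by rw [← hi, hv h]

lemma map_mem_coinvariantsKer {p : V →ₗ[k] W} (hp : ∀ h v, p (τ h v) = σ h (p v)) :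
    ∀ v ∈ Representation.Coinvariants.ker τ, p v ∈ Representation.Coinvariants.ker σ := by
  have hle : Representation.Coinvariants.ker τ ≤ (Representation.Coinvariants.ker σ).comap p := by
    refine Submodule.span_le.2 ?_
    rintro _ ⟨⟨h, v⟩, rfl⟩
    change p (τ h v - v) ∈ Representation.Coinvariants.ker σ
    rw [map_sub, hp]
    exact Representation.Coinvariants.sub_mem_ker h (p v)
  exact hle

lemma surjective_restrict_invariants (hτ : Codisjoint τ.invariants
      (Representation.Coinvariants.ker τ))
    (hσ : Disjoint σ.invariants (Representation.Coinvariants.ker σ)) {p : V →ₗ[k] W}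
    (hp : ∀ h v, p (τ h v) = σ h (p v)) (hsurj : Function.Surjective p) :
    Function.Surjective (p.restrict (map_mem_invariants hp)) := by
  rintro ⟨w, hw⟩
  obtain ⟨v, rfl⟩ := hsurj w
  obtain ⟨u, hu, c, hc, rfl⟩ := Submodule.mem_sup.1 (hτ.eq_top ▸ Submodule.mem_top (x := v))
  have hpc : p c ∈ σ.invariants := by
    rw [← add_sub_cancel_left (p u) (p c), ← map_add]
    exact sub_mem hw (map_mem_invariants hp u hu)
  have hzero := Submodule.disjoint_def.1 hσ _ hpc (map_mem_coinvariantsKer hp c hc)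
  exact ⟨⟨u, hu⟩, Subtype.ext (by simp [hzero])⟩

lemma exact_restrict_invariants {i : W →ₗ[k] V} {p : V →ₗ[k] X}
    (hi : ∀ h v, i (σ h v) = τ h (i v)) (hp : ∀ h v, p (τ h v) = υ h (p v))
    (hinj : Function.Injective i) (hip : Function.Exact i p) :
    Function.Exact (i.restrict (map_mem_invariants hi)) (p.restrict (map_mem_invariants hp)) := by
  rintro ⟨v, hv⟩
  constructor
  · intro h
    obtain ⟨w, rfl⟩ := (hip v).1 (congrArg Subtype.val h)
    exact ⟨⟨w, fun g => hinj ((hi g w).trans (hv g))⟩, rfl⟩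
  · rintro ⟨w, hw⟩
    rw [← hw]
    exact Subtype.ext ((hip _).2 ⟨w, rfl⟩)

lemma RepHasIndex.of_exact (hgen : M ⊔ Subgroup.zpowers ϖ = ⊤)
    (hσM : IsCompl (Representation.invariants (σ.comp M.subtype))
      (Representation.Coinvariants.ker (σ.comp M.subtype)))
    (hτM : IsCompl (Representation.invariants (τ.comp M.subtype))
      (Representation.Coinvariants.ker (τ.comp M.subtype)))
    (hυM : IsCompl (Representation.invariants (υ.comp M.subtype))
      (Representation.Coinvariants.ker (υ.comp M.subtype)))
    {i : W →ₗ[k] V} {p : V →ₗ[k] X} (hi : ∀ h v, i (σ h v) = τ h (i v))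
    (hp : ∀ h v, p (τ h v) = υ h (p v)) (hinj : Function.Injective i)
    (hsurj : Function.Surjective p) (hip : Function.Exact i p) {d e : ℤ}
    (hσ : RepHasIndex σ d) (hυ : RepHasIndex υ e) : RepHasIndex τ (d + e) := by
  have hiM (m : M) (v : W) : i ((σ.comp M.subtype) m v) = (τ.comp M.subtype) m (i v) := hi m v
  have hpM (m : M) (v : V) : p ((τ.comp M.subtype) m v) = (υ.comp M.subtype) m (p v) := hp m v
  refine (repHasIndex_iff hgen hτM).2 (MapHasIndex.of_exact
    ((repHasIndex_iff hgen hσM).1 hσ) ((repHasIndex_iff hgen hυM).1 hυ)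
    (i := i.restrict (map_mem_invariants hiM)) (p := p.restrict (map_mem_invariants hpM))
    (fun v w h => Subtype.ext (hinj (congrArg Subtype.val h)))
    (surjective_restrict_invariants hτM.codisjoint hυM.disjoint hpM hsurj)
    (exact_restrict_invariants hiM hpM hinj hip) ?_ ?_)
  · ext v
    simp [hi]
  · ext v
    simp [hp]

end Group

lemma finiteDimensional_of_forall_eq_bot_or_eq_top
    (hV : ∀ U : Submodule k V, U = ⊥ ∨ U = ⊤) : FiniteDimensional k V := by
  obtain _ | _ := subsingleton_or_nontrivial V
  · infer_instance
  · obtain ⟨v, hv⟩ := exists_ne (0 : V)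
    have hspan : Submodule.span k {v} = ⊤ :=
      (hV _).resolve_left fun h0 => hv (Submodule.span_singleton_eq_bot.1 h0)
    exact Module.finite_def.2 (hspan ▸ Submodule.fg_span_singleton v)

lemma repHasIndex_zero_of_forall_eq_one [Group H] {τ : Representation k H V}
    [FiniteDimensional k V] (htriv : ∀ h, τ h = 1) : RepHasIndex τ 0 := by
  have hinv : τ.invariants = ⊤ := by
    ext v
    simp [htriv]
  have hker : Representation.Coinvariants.ker τ = ⊥ := by
    refine (Submodule.eq_bot_iff _).2 fun v hv => Submodule.span_induction ?_ rfl ?_ ?_ hv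
    · rintro _ ⟨⟨h, w⟩, rfl⟩
      simp [htriv]
    · rintro x y _ _ rfl rfl
      exact add_zero 0
    · rintro c x _ rfl
      exact smul_zero c
  refine ⟨inferInstance, inferInstance, ?_⟩
  rw [hinv, hker, finrank_top, (Submodule.quotEquivOfEqBot ⊥ rfl).finrank_eq, sub_self]

lemma repHasIndex_zero_of_ker_range [Group H] {τ : Representation k H V} {h : H}
    (hker : LinearMap.ker (τ h - 1) = ⊥) (hrange : LinearMap.range (τ h - 1) = ⊤) :
    RepHasIndex τ 0 := by
  have hinv : τ.invariants = ⊥ :=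
    (Submodule.eq_bot_iff _).2 fun v hv =>
      (Submodule.mem_bot k).1 (hker ▸ LinearMap.mem_ker.2 (sub_eq_zero.2 (hv h)))
  have hcoinv : Representation.Coinvariants.ker τ = ⊤ := by
    refine top_unique (hrange ▸ ?_)
    rintro _ ⟨v, rfl⟩
    exact Representation.Coinvariants.sub_mem_ker h v
  have : Subsingleton (V ⧸ Representation.Coinvariants.ker τ) :=
    Submodule.Quotient.subsingleton_iff.2 hcoinv
  refine ⟨hinv ▸ inferInstance, inferInstance, ?_⟩
  rw [hinv, finrank_bot, Module.finrank_zero_of_subsingleton, Nat.cast_zero, sub_self]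

/-- By commutativity the kernel and the range of every `τ h - 1` are subrepresentations. -/
lemma repHasIndex_zero_of_irred [CommGroup H] {τ : Representation k H V}
    (hτ : ∀ U : Submodule k V, (∀ h, ∀ v ∈ U, τ h v ∈ U) → U = ⊥ ∨ U = ⊤) : RepHasIndex τ 0 := by
  by_cases htriv : ∀ h, τ h = 1
  · have := finiteDimensional_of_forall_eq_bot_or_eq_top fun U =>
      hτ U fun h v hv => by rwa [htriv, Module.End.one_apply]
    exact repHasIndex_zero_of_forall_eq_one htriv
  · push Not at htriv
    obtain ⟨h, hh⟩ := htriv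
    have hcomm (g : H) (v : V) : (τ h - 1) (τ g v) = τ g ((τ h - 1) v) := by
      simp only [LinearMap.sub_apply, Module.End.one_apply, map_sub, apply_apply_comm g]
    refine repHasIndex_zero_of_ker_range (h := h) ((hτ _ ?_).resolve_right ?_)
      ((hτ _ ?_).resolve_left ?_)
    · intro g v hv
      rw [LinearMap.mem_ker, hcomm, LinearMap.mem_ker.1 hv, map_zero]
    · exact fun htop => hh (sub_eq_zero.1 (LinearMap.ker_eq_top.1 htop))
    · rintro g _ ⟨v, rfl⟩
      exact ⟨τ g v, hcomm g v⟩
    · exact fun hbot => hh (sub_eq_zero.1 (LinearMap.range_eq_bot.1 hbot))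

end RepIndex

/-! ### Smooth representations -/

section Smooth

open Topology Aff

/-- Smoothness, as a condition at the identity: on a topological group it says that the stabilizers
of all vectors are open. -/
def IsSmooth {k H V : Type*} [Field k] [Monoid H] [TopologicalSpace H] [AddCommGroup V] [Module k V]
    (τ : Representation k H V) : Prop :=
  ∀ v, ∀ᶠ h in 𝓝 1, τ h v = v

section General

variable {k H V : Type*} [Field k] [AddCommGroup V] [Module k V] [TopologicalSpace H]

lemma IsSmooth.comp {H' : Type*} [Monoid H] [Monoid H'] [TopologicalSpace H']
    {τ : Representation k H V} (hτ : IsSmooth τ) {f : H' →* H} (hf : Continuous f) :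
    IsSmooth (τ.comp f) := fun v =>
  (map_one f ▸ hf.tendsto 1).eventually (hτ v)

variable [Group H] {τ : Representation k H V}

lemma IsSmooth.twist (hτ : IsSmooth τ) {θ : H →* kˣ} (hθ : ∀ᶠ h in 𝓝 1, θ h = 1) :
    IsSmooth (twist τ θ) := fun v => by
  filter_upwards [hτ v, hθ] with h hv hone
  rw [twist_apply, hone, inv_one, one_smul, hv]

lemma IsSmooth.isOpen_repStabilizer [IsTopologicalGroup H] (hτ : IsSmooth τ) (v : V) :
    IsOpen (repStabilizer τ v : Set H) :=
  Subgroup.isOpen_of_mem_nhds _ (g := 1) (hτ v)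

lemma IsSmooth.finiteIndex_repStabilizer [IsTopologicalGroup H] [CompactSpace H]
    (hτ : IsSmooth τ) (v : V) : (repStabilizer τ v).FiniteIndex :=
  have := Subgroup.quotient_finite_of_isOpen _ (hτ.isOpen_repStabilizer v)
  Subgroup.finiteIndex_of_finite_quotient

lemma IsSmooth.isCompl_comp_subtype {H : Type*} [CommGroup H] [TopologicalSpace H]
    [IsTopologicalGroup H] {τ : Representation k H V} [CharZero k] (hτ : IsSmooth τ)
    (M : Subgroup H) [CompactSpace M] :
    IsCompl (Representation.invariants (τ.comp M.subtype))
      (Representation.Coinvariants.ker (τ.comp M.subtype)) :=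
  isCompl_invariants_coinvariantsKer
    (hτ.comp continuous_subtype_val).finiteIndex_repStabilizer

end General

section Subquotient

variable {G V : Type*} [Monoid G] [TopologicalSpace G] [AddCommGroup V] [Module ℂ V]
  {ρ : Representation ℂ G V}

lemma IsSmooth.sub (hρ : IsSmooth ρ) {U : Submodule ℂ V} (hU : GRep.Invariant ρ U) :
    IsSmooth (GRep.sub ρ hU) := fun v => by
  filter_upwards [hρ v] with g hg
  exact Subtype.ext hg

lemma IsSmooth.quot (hρ : IsSmooth ρ) {U : Submodule ℂ V} (hU : GRep.Invariant ρ U) :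
    IsSmooth (GRep.quot ρ U hU) := fun x => by
  obtain ⟨v, rfl⟩ := Submodule.Quotient.mk_surjective U x
  filter_upwards [hρ v] with g hg
  rw [GRep.quot_apply, hg]

end Subquotient

variable {K : Type*} [Field K]

/-- The inclusion of `S ≅ (K, +)` in `TS`. -/
def sSHom : Multiplicative K →* Aff K where
  toFun b := sS b.toAdd
  map_one' := rfl
  map_mul' b c := by ext <;> simp

variable [TopologicalSpace K]

lemma continuous_xTHom : Continuous (xTHom : Kˣ →* Aff K) :=
  continuous_induced_rng.2 (continuous_id.prodMk continuous_const)

lemma continuous_sSHom : Continuous (sSHom : Multiplicative K →* Aff K) :=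
  continuous_induced_rng.2 (continuous_const.prodMk continuous_toAdd)

lemma IsSmoothRep.isSmooth {V : Type*} [AddCommGroup V] [Module ℂ V] {ρ : Rep K V}
    (hρ : IsSmoothRep ρ) : IsSmooth ρ := fun v =>
  (hρ v).mem_nhds (show ρ 1 v = v by rw [map_one, Module.End.one_apply])

lemma SmoothMulChar.eventually_eq_one {χ : Kˣ →* ℂˣ} (hχ : SmoothMulChar χ) :
    ∀ᶠ u in 𝓝 1, χ u = 1 :=
  hχ.mem_nhds (map_one χ)

end Smooth

/-! ### Nonarchimedean local fields -/

section LocalField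

variable {K : Type*} [NontriviallyNormedField K]

variable (K) in
/-- The group `𝒪ˣ` of elements of norm one. -/
def normOneUnits : Subgroup Kˣ := (Units.map (normHom : K →*₀ ℝ).toMonoidHom).ker

@[simp] lemma mem_normOneUnits {u : Kˣ} : u ∈ normOneUnits K ↔ ‖(u : K)‖ = 1 :=
  Units.ext_iff

lemma isOpen_normOneUnits [IsUltrametricDist K] : IsOpen (normOneUnits K : Set Kˣ) := by
  have hsphere : (normOneUnits K : Set Kˣ) = (↑) ⁻¹' Metric.sphere (0 : K) 1 := by
    ext u
    simp
  exact hsphere ▸ (IsUltrametricDist.isOpen_sphere 0 one_ne_zero).preimage Units.continuous_val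

/-- A uniformizer: the set of norms of units is generated by `‖ϖ‖ < 1`. -/
structure IsUniformizer (ϖ : Kˣ) : Prop where
  norm_lt_one : ‖(ϖ : K)‖ < 1
  exists_norm_eq_zpow (u : Kˣ) : ∃ n : ℤ, ‖(u : K)‖ = ‖(ϖ : K)‖ ^ n

lemma IsUniformizer.normOneUnits_sup_zpowers {ϖ : Kˣ} (hϖ : IsUniformizer ϖ) :
    normOneUnits K ⊔ Subgroup.zpowers ϖ = ⊤ := by
  refine eq_top_iff.2 fun u _ => ?_
  obtain ⟨n, hn⟩ := hϖ.exists_norm_eq_zpow u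
  refine Subgroup.mem_sup.2 ⟨u * (ϖ ^ n)⁻¹, ?_, ϖ ^ n, ⟨n, rfl⟩, inv_mul_cancel_right _ _⟩
  have hne : ‖(ϖ : K)‖ ≠ 0 := norm_ne_zero_iff.2 ϖ.ne_zero
  simp [hn, zpow_ne_zero n hne]

lemma isUniformizer_of_forall_norm_le {ϖ : Kˣ} (hlt : ‖(ϖ : K)‖ < 1)
    (hmax : ∀ x : K, ‖x‖ < 1 → ‖x‖ ≤ ‖(ϖ : K)‖) : IsUniformizer ϖ := by
  refine ⟨hlt, fun u => ?_⟩
  have hu : 0 < ‖(u : K)‖ := norm_pos_iff.2 u.ne_zero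
  have hpos : 0 < ‖(ϖ : K)‖ := norm_pos_iff.2 ϖ.ne_zero
  obtain ⟨n, hn, hn'⟩ := exists_mem_Ioc_zpow hu ((one_lt_inv₀ hpos).2 hlt)
  rw [inv_zpow'] at hn hn'
  have hle : ‖(u : K) * ϖ ^ (n + 1)‖ ≤ 1 := by
    rw [norm_mul, norm_zpow, ← le_div_iff₀ (zpow_pos hpos _), one_div, ← zpow_neg]
    exact hn'
  have hgt : ‖(ϖ : K)‖ < ‖(u : K) * ϖ ^ (n + 1)‖ := by
    rw [norm_mul, norm_zpow, ← div_lt_iff₀ (zpow_pos hpos _), zpow_add_one₀ hpos.ne',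
      div_mul_cancel_right₀ hpos.ne', ← zpow_neg]
    exact hn
  have hone : ‖(u : K) * ϖ ^ (n + 1)‖ = 1 :=
    hle.antisymm (not_lt.1 fun h => hgt.not_ge (hmax _ h))
  rw [norm_mul, norm_zpow] at hone
  exact ⟨-(n + 1), by rw [zpow_neg, eq_inv_of_mul_eq_one_left hone]⟩

variable [ProperSpace K]

lemma isCompact_setOf_norm_mem_Icc {r : ℝ} (hr : 0 < r) (R : ℝ) :
    IsCompact {u : Kˣ | ‖(u : K)‖ ∈ Set.Icc r R} := by
  have himage : ((↑) : Kˣ → K) '' {u : Kˣ | ‖(u : K)‖ ∈ Set.Icc r R} = norm ⁻¹' Set.Icc r R := by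
    refine Set.Subset.antisymm (Set.image_subset_iff.2 fun _ h => h) fun x hx => ?_
    exact ⟨Units.mk0 x (norm_pos_iff.1 (hr.trans_le hx.1)), hx, rfl⟩
  rw [Units.isEmbedding_val₀.isCompact_iff, himage]
  refine (isCompact_closedBall (0 : K) R).of_isClosed_subset
    (isClosed_Icc.preimage continuous_norm) fun x hx => ?_
  exact mem_closedBall_zero_iff.2 hx.2

instance : CompactSpace (normOneUnits K) := by
  have hset : (normOneUnits K : Set Kˣ) = {u : Kˣ | ‖(u : K)‖ ∈ Set.Icc 1 1} := by
    ext u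
    simp
  exact isCompact_iff_compactSpace.1 (hset ▸ isCompact_setOf_norm_mem_Icc one_pos 1)

variable [IsUltrametricDist K]

variable (K) in
lemma exists_isUniformizer : ∃ ϖ : Kˣ, IsUniformizer ϖ := by
  have hcompact : IsCompact (Metric.ball (0 : K) 1) :=
    (isCompact_closedBall 0 1).of_isClosed_subset (IsUltrametricDist.isClosed_ball 0 1)
      Metric.ball_subset_closedBall
  obtain ⟨p, hp, hmax⟩ :=
    hcompact.exists_isMaxOn ⟨0, Metric.mem_ball_self one_pos⟩ continuous_norm.continuousOn
  replace hmax (x : K) (hx : ‖x‖ < 1) : ‖x‖ ≤ ‖p‖ := hmax (mem_ball_zero_iff.2 hx)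
  obtain ⟨y, hy, hy'⟩ := NormedField.exists_norm_lt K one_pos
  exact ⟨Units.mk0 p (norm_pos_iff.1 (hy.trans_le (hmax y hy'))),
    isUniformizer_of_forall_norm_le (mem_ball_zero_iff.1 hp) hmax⟩

end LocalField

/-! ### The index of `𝕊` -/

section Shift

variable {k M : Type*} [Field k] [AddCommGroup M] [Module k M] (b : Module.Basis ℤ k M)
  {f : M →ₗ[k] M}

include b

lemma ker_eq_bot_of_shift_sub_one (hf : ∀ n, f (b n) = b (n - 1) - b n) :
    LinearMap.ker f = ⊥ := by
  have hrepr (v : M) (n : ℤ) : b.repr (f v) n = b.repr v (n + 1) - b.repr v n := by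
    have hlin : b.coord n ∘ₗ f = b.coord (n + 1) - b.coord n := b.ext fun m => by
      simp [hf, Finsupp.single_apply, sub_eq_iff_eq_add]
    exact LinearMap.congr_fun hlin v
  refine LinearMap.ker_eq_bot'.2 fun v hv => ?_
  have hstep (n : ℤ) : b.repr v (n + 1) = b.repr v n := by
    rw [← sub_eq_zero, ← hrepr, hv, map_zero, Finsupp.zero_apply]
  have hconst (n : ℤ) : b.repr v n = b.repr v 0 := by
    induction n using Int.induction_on with
    | zero => rfl
    | succ n ih => rw [hstep, ih]
    | pred n ih => rw [← ih, ← hstep, sub_add_cancel]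
  obtain ⟨n, hn⟩ := Infinite.exists_notMem_finset (b.repr v).support
  refine b.ext_elem fun m => ?_
  rw [hconst, ← hconst n, Finsupp.notMem_support_iff.1 hn, map_zero, Finsupp.zero_apply]

lemma range_eq_ker_of_shift_sub_one (hf : ∀ n, f (b n) = b (n - 1) - b n) :
    LinearMap.range f = LinearMap.ker (b.constr k fun _ => (1 : k)) := by
  set ε := b.constr k fun _ => (1 : k)
  have hε (n : ℤ) : ε (b n) = 1 := b.constr_basis k _ n
  refine le_antisymm ?_ fun v hv => ?_
  · rintro _ ⟨v, rfl⟩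
    have hzero : ε ∘ₗ f = 0 := b.ext fun n => by simp [hf, hε]
    exact LinearMap.congr_fun hzero v
  · have hbasis (n : ℤ) : b n - b 0 ∈ LinearMap.range f := by
      induction n using Int.induction_on with
      | zero => simp
      | succ n ih =>
        have hmem := sub_mem ih (LinearMap.mem_range_self f (b (n + 1)))
        rwa [hf, add_sub_cancel_right, sub_sub_sub_cancel_left] at hmem
      | pred n ih =>
        have hmem := add_mem (LinearMap.mem_range_self f (b (-n))) ih
        rwa [hf, sub_add_sub_cancel] at hmem
    have hall (w : M) : w - ε w • b 0 ∈ LinearMap.range f := by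
      induction b.mem_span w using Submodule.span_induction with
      | mem w hw =>
        obtain ⟨n, rfl⟩ := hw
        rw [hε, one_smul]
        exact hbasis n
      | zero => simp
      | add x y _ _ hx hy =>
        rw [map_add, add_smul, add_sub_add_comm]
        exact add_mem hx hy
      | smul c x _ hx =>
        rw [map_smul, smul_assoc, ← smul_sub]
        exact Submodule.smul_mem _ c hx
    simpa [LinearMap.mem_ker.1 hv] using hall v

lemma mapHasIndex_of_shift_sub_one (hf : ∀ n, f (b n) = b (n - 1) - b n) : MapHasIndex f (-1) := by
  have hsurj : Function.Surjective (b.constr k fun _ => (1 : k)) := fun c =>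
    ⟨c • b 0, by simp⟩
  have hker := ker_eq_bot_of_shift_sub_one b hf
  let e := (Submodule.quotEquivOfEq _ _ (range_eq_ker_of_shift_sub_one b hf)).trans
    (LinearMap.quotKerEquivOfSurjective _ hsurj)
  refine ⟨hker ▸ inferInstance, Module.Finite.equiv e.symm, ?_⟩
  rw [LinearMap.index_eq_finrank_sub, hker, e.finrank_eq, finrank_bot, Module.finrank_self]
  rfl

end Shift

lemma isLocallyConstant_of_eventually_mul {H Y : Type*} [Group H] [TopologicalSpace H]
    [IsTopologicalGroup H] {f : H → Y} (hf : ∀ x, ∀ᶠ u in nhds 1, f (x * u) = f x) :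
    IsLocallyConstant f := by
  refine (IsLocallyConstant.iff_eventually_eq f).2 fun x => ?_
  have htendsto : Filter.Tendsto (x⁻¹ * ·) (nhds x) (nhds 1) :=
    inv_mul_cancel x ▸ (continuous_const_mul x⁻¹).tendsto x
  filter_upwards [htendsto.eventually (hf x)] with y hy
  rwa [mul_inv_cancel_left] at hy

lemma eventually_forall_mul_eq {H Y : Type*} [Group H] [TopologicalSpace H] [IsTopologicalGroup H]
    [Zero Y] {f : H → Y} (hf : IsLocallyConstant f) (hf' : HasCompactSupport f) :
    ∀ᶠ u in nhds 1, ∀ x, f (x * u) = f x := by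
  have hgood : ∀ᶠ u in nhds (1 : H), ∀ x ∈ tsupport f, f (x * u) = f x := by
    refine hf'.isCompact.eventually_forall_of_forall_eventually fun x _ => ?_
    have hmul : Filter.Tendsto (fun p : H × H => p.2 * p.1) (nhds (1, x)) (nhds x) :=
      (continuous_snd.mul continuous_fst).tendsto' _ _ (mul_one x)
    filter_upwards [hmul.eventually (hf.eventually_eq x),
      (continuous_snd.tendsto ((1 : H), x)).eventually (hf.eventually_eq x)] with p hp hp'
    exact hp.trans hp'.symm
  have hinv := (inv_one (G := H) ▸ continuous_inv.tendsto (1 : H)).eventually hgood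
  filter_upwards [hgood, hinv] with u hu hu' x
  by_cases hx : x ∈ tsupport f
  · exact hu x hx
  by_cases hxu : x * u ∈ tsupport f
  · rw [← hu' _ hxu, mul_inv_cancel_right]
  · rw [image_eq_zero_of_notMem_tsupport hx, image_eq_zero_of_notMem_tsupport hxu]

section SRep

open Aff

variable {K : Type*} [NontriviallyNormedField K]

lemma SRep_xT_apply {ψ : AddChar K ℂ} (hψlc : IsLocallyConstant ψ) (u : Kˣ) (f : SSx K)
    (x : Kˣ) : (SRep ψ hψlc (xT u) f : Kˣ → ℂ) x = (f : Kˣ → ℂ) (x * u) := by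
  change ψ (0 * (x : K)) * (f : Kˣ → ℂ) (x * u) = _
  rw [zero_mul, AddChar.map_zero_eq_one, one_mul]

lemma twist_SRep_apply {ψ : AddChar K ℂ} (hψlc : IsLocallyConstant ψ) (χ : Kˣ →* ℂˣ) (u : Kˣ)
    (f : SSx K) (x : Kˣ) :
    (twist ((SRep ψ hψlc).comp xTHom) χ u f : Kˣ → ℂ) x =
      ((χ u)⁻¹ : ℂˣ) * (f : Kˣ → ℂ) (x * u) := by
  change ((χ u)⁻¹ : ℂˣ) * (SRep ψ hψlc (xT u) f : Kˣ → ℂ) x = _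
  rw [SRep_xT_apply]

lemma isSmooth_SRep_comp_xTHom {ψ : AddChar K ℂ} (hψlc : IsLocallyConstant ψ) :
    IsSmooth ((SRep ψ hψlc).comp xTHom) := fun f => by
  filter_upwards [eventually_forall_mul_eq f.2.1 f.2.2] with u hu
  exact Subtype.ext (funext fun x => (SRep_xT_apply hψlc u f x).trans (hu x))

lemma apply_eq_of_norm_eq {ψ : AddChar K ℂ} {hψlc : IsLocallyConstant ψ} {χ : Kˣ →* ℂˣ}
    {f : SSx K}
    (hf : f ∈ Representation.invariants
      ((twist ((SRep ψ hψlc).comp xTHom) χ).comp (normOneUnits K).subtype))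
    {x γ : Kˣ} (hx : ‖(x : K)‖ = ‖(γ : K)‖) :
    (f : Kˣ → ℂ) x = χ x * ((χ γ)⁻¹ : ℂˣ) * (f : Kˣ → ℂ) γ := by
  have hu : γ⁻¹ * x ∈ normOneUnits K := by
    have hne : ‖(γ : K)‖ ≠ 0 := norm_ne_zero_iff.2 γ.ne_zero
    simp [hx, hne]
  have hval := congrFun (congrArg Subtype.val (hf ⟨_, hu⟩)) γ
  change (twist ((SRep ψ hψlc).comp xTHom) χ (γ⁻¹ * x) f : Kˣ → ℂ) γ = _ at hval
  rw [twist_SRep_apply, mul_inv_cancel_left] at hval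
  rw [← hval, ← mul_assoc, ← Units.val_mul, ← Units.val_mul, map_mul, map_inv, mul_inv, inv_inv,
    mul_comm (χ γ), mul_mul_mul_comm, mul_inv_cancel, one_mul, inv_mul_cancel, Units.val_one,
    one_mul]

/-- The function `χ · 1_{γ 𝒪ˣ}`. -/
def charOnShell (χ : Kˣ →* ℂˣ) (γ : Kˣ) (x : Kˣ) : ℂ :=
  if ‖(x : K)‖ = ‖(γ : K)‖ then χ x else 0

lemma charOnShell_mul (χ : Kˣ →* ℂˣ) (γ x u : Kˣ) :
    charOnShell χ γ (x * u) = χ u * charOnShell χ (γ * u⁻¹) x := by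
  have hnorm : ‖((x * u : Kˣ) : K)‖ = ‖(γ : K)‖ ↔ ‖(x : K)‖ = ‖((γ * u⁻¹ : Kˣ) : K)‖ := by
    simp only [Units.val_mul, norm_mul, Units.val_inv_eq_inv_val, norm_inv]
    exact (eq_mul_inv_iff_mul_eq₀ (norm_ne_zero_iff.2 u.ne_zero)).symm
  rw [charOnShell, charOnShell, if_congr hnorm rfl rfl, map_mul, mul_comm (χ x),
    Units.val_mul (χ u), mul_ite, mul_zero]

lemma charOnShell_congr (χ : Kˣ →* ℂˣ) {γ γ' : Kˣ} (h : ‖(γ : K)‖ = ‖(γ' : K)‖) :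
    charOnShell χ γ = charOnShell χ γ' := by
  unfold charOnShell
  rw [h]

lemma IsUniformizer.norm_zpow_inj {ϖ : Kˣ} (hϖ : IsUniformizer ϖ) {m n : ℤ} :
    ‖(ϖ : K)‖ ^ m = ‖(ϖ : K)‖ ^ n ↔ m = n :=
  (zpow_right_injective₀ (norm_pos_iff.2 ϖ.ne_zero) hϖ.norm_lt_one.ne).eq_iff

lemma IsUniformizer.charOnShell_zpow {ϖ : Kˣ} (hϖ : IsUniformizer ϖ) (χ : Kˣ →* ℂˣ) {m : ℤ}
    {x : Kˣ} (hx : ‖(x : K)‖ = ‖(ϖ : K)‖ ^ m) (n : ℤ) :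
    charOnShell χ (ϖ ^ n) x = if m = n then (χ x : ℂ) else 0 := by
  simp only [charOnShell, Units.val_zpow_eq_zpow_val, norm_zpow, hx, hϖ.norm_zpow_inj]

lemma IsUniformizer.linearIndependent_charOnShell {ϖ : Kˣ} (hϖ : IsUniformizer ϖ)
    (χ : Kˣ →* ℂˣ) : LinearIndependent ℂ fun n : ℤ => charOnShell χ (ϖ ^ n) := by
  refine linearIndependent_iff'.2 fun t g hg m hm => ?_
  have heval := congrFun hg (ϖ ^ m)
  simp only [Finset.sum_apply, Pi.smul_apply, hϖ.charOnShell_zpow χ (x := ϖ ^ m) (m := m) (by simp),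
    smul_eq_mul, mul_ite, mul_zero, Finset.sum_ite_eq, hm, if_true, Pi.zero_apply] at heval
  exact (mul_eq_zero.1 heval).resolve_right (Units.ne_zero _)

variable [IsUltrametricDist K]

lemma charOnShell_eventually_mul {χ : Kˣ →* ℂˣ} (hχ : SmoothMulChar χ) (γ x : Kˣ) :
    ∀ᶠ u in nhds 1, charOnShell χ γ (x * u) = charOnShell χ γ x := by
  filter_upwards [hχ.eventually_eq_one,
    isOpen_normOneUnits.mem_nhds (one_mem (normOneUnits K))] with u hone hnorm
  have hγ : ‖((γ * u⁻¹ : Kˣ) : K)‖ = ‖(γ : K)‖ := by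
    simp [mem_normOneUnits.1 hnorm]
  rw [charOnShell_mul, hone, charOnShell_congr χ hγ, Units.val_one, one_mul]

lemma IsUniformizer.exists_finset_of_isCompact {ϖ : Kˣ} (hϖ : IsUniformizer ϖ) {C : Set Kˣ}
    (hC : IsCompact C) : ∃ t : Finset ℤ, ∀ x ∈ C, ∃ n ∈ t, ‖(x : K)‖ = ‖(ϖ : K)‖ ^ n := by
  have hpos (n : ℤ) : ‖(ϖ : K)‖ ^ n ≠ 0 := zpow_ne_zero n (norm_ne_zero_iff.2 ϖ.ne_zero)
  obtain ⟨t, ht⟩ := hC.elim_finite_subcover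
    (fun n : ℤ => (↑) ⁻¹' Metric.sphere (0 : K) (‖(ϖ : K)‖ ^ n))
    (fun n => (IsUltrametricDist.isOpen_sphere 0 (hpos n)).preimage Units.continuous_val)
    fun x _ => Set.mem_iUnion.2 <| (hϖ.exists_norm_eq_zpow x).imp fun n hn => by simpa using hn
  refine ⟨t, fun x hx => ?_⟩
  simpa using ht hx

variable [ProperSpace K]

lemma charOnShell_mem_SSx {χ : Kˣ →* ℂˣ} (hχ : SmoothMulChar χ) (γ : Kˣ) :
    charOnShell χ γ ∈ SSx K := by
  refine ⟨isLocallyConstant_of_eventually_mul (charOnShell_eventually_mul hχ γ),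
    HasCompactSupport.of_support_subset_isCompact
      (isCompact_setOf_norm_mem_Icc (norm_pos_iff.2 γ.ne_zero) ‖(γ : K)‖) fun x hx => ?_⟩
  have hnorm : ‖(x : K)‖ = ‖(γ : K)‖ := by_contra fun h => hx (if_neg h)
  exact ⟨hnorm.ge, hnorm.le⟩

variable {ψ : AddChar K ℂ} (hψlc : IsLocallyConstant ψ) {χ : Kˣ →* ℂˣ}

/-- `charOnShell` as an element of the `𝒪ˣ`-invariants of `𝕊 ⊗ χ⁻¹`. -/
def charOnShellInvariant (hχ : SmoothMulChar χ) (γ : Kˣ) :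
    Representation.invariants
      ((twist ((SRep ψ hψlc).comp xTHom) χ).comp (normOneUnits K).subtype) :=
  ⟨⟨charOnShell χ γ, charOnShell_mem_SSx hχ γ⟩, fun u => Subtype.ext <| funext fun x => by
    have hγ : ‖((γ * (u : Kˣ)⁻¹ : Kˣ) : K)‖ = ‖(γ : K)‖ := by
      simp [mem_normOneUnits.1 u.2]
    change (twist ((SRep ψ hψlc).comp xTHom) χ u _ : Kˣ → ℂ) x = charOnShell χ γ x
    rw [twist_SRep_apply]
    change ((χ u)⁻¹ : ℂˣ) * charOnShell χ γ (x * u) = _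
    rw [charOnShell_mul, charOnShell_congr χ hγ, ← mul_assoc, ← Units.val_mul,
      inv_mul_cancel, Units.val_one, one_mul]⟩

lemma IsUniformizer.linearIndependent_charOnShellInvariant {ϖ : Kˣ} (hϖ : IsUniformizer ϖ)
    (hχ : SmoothMulChar χ) :
    LinearIndependent ℂ fun n : ℤ => charOnShellInvariant hψlc hχ (ϖ ^ n) :=
  LinearIndependent.of_comp ((SSx K).subtype ∘ₗ (Representation.invariants
      ((twist ((SRep ψ hψlc).comp xTHom) χ).comp (normOneUnits K).subtype)).subtype)
    (hϖ.linearIndependent_charOnShell χ)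

lemma IsUniformizer.span_charOnShellInvariant {ϖ : Kˣ} (hϖ : IsUniformizer ϖ)
    (hχ : SmoothMulChar χ) :
    ⊤ ≤ Submodule.span ℂ (Set.range fun n : ℤ => charOnShellInvariant hψlc hχ (ϖ ^ n)) := by
  intro f _
  obtain ⟨t, ht⟩ := hϖ.exists_finset_of_isCompact f.1.2.2.isCompact
  let coeff (n : ℤ) : ℂ := ((χ (ϖ ^ n))⁻¹ : ℂˣ) * (f.1 : Kˣ → ℂ) (ϖ ^ n)
  have hsum : f = ∑ n ∈ t, coeff n • charOnShellInvariant hψlc hχ (ϖ ^ n) := by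
    refine Subtype.ext (Subtype.ext (funext fun x => ?_))
    obtain ⟨m, hm⟩ := hϖ.exists_norm_eq_zpow x
    simp only [Submodule.coe_sum, Finset.sum_apply, Submodule.coe_smul, Pi.smul_apply,
      charOnShellInvariant, hϖ.charOnShell_zpow χ hm, smul_eq_mul, mul_ite, mul_zero,
      Finset.sum_ite_eq]
    split_ifs with hmt
    · rw [apply_eq_of_norm_eq f.2 (γ := ϖ ^ m) (by simp [hm])]
      ring
    · by_contra hne
      obtain ⟨n, hn, hxn⟩ := ht x (subset_tsupport _ hne)
      exact hmt (hϖ.norm_zpow_inj.1 (hm.symm.trans hxn) ▸ hn)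
  rw [hsum]
  exact Submodule.sum_mem _ fun n _ => Submodule.smul_mem _ _ (Submodule.subset_span ⟨n, rfl⟩)

lemma subOneOnInvariants_charOnShellInvariant (hχ : SmoothMulChar χ) (ϖ γ : Kˣ) :
    subOneOnInvariants (twist ((SRep ψ hψlc).comp xTHom) χ) (normOneUnits K) ϖ
        (charOnShellInvariant hψlc hχ γ) =
      charOnShellInvariant hψlc hχ (γ * ϖ⁻¹) - charOnShellInvariant hψlc hχ γ := by
  refine Subtype.ext (Subtype.ext (funext fun x => ?_))
  change (twist ((SRep ψ hψlc).comp xTHom) χ ϖ _ : Kˣ → ℂ) x - charOnShell χ γ x =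
    charOnShell χ (γ * ϖ⁻¹) x - charOnShell χ γ x
  rw [twist_SRep_apply]
  change ((χ ϖ)⁻¹ : ℂˣ) * charOnShell χ γ (x * ϖ) - _ = _
  rw [charOnShell_mul, ← mul_assoc, ← Units.val_mul, inv_mul_cancel, Units.val_one, one_mul]

lemma repHasIndex_twist_SRep (hχ : SmoothMulChar χ) :
    RepHasIndex (twist ((SRep ψ hψlc).comp xTHom) χ) (-1) := by
  obtain ⟨ϖ, hϖ⟩ := exists_isUniformizer K
  refine (repHasIndex_iff hϖ.normOneUnits_sup_zpowers
    (((isSmooth_SRep_comp_xTHom hψlc).twist hχ.eventually_eq_one).isCompl_comp_subtype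
      (normOneUnits K))).2 ?_
  let b := Module.Basis.mk (hϖ.linearIndependent_charOnShellInvariant hψlc hχ)
    (hϖ.span_charOnShellInvariant hψlc hχ)
  have hb (n : ℤ) : b n = charOnShellInvariant hψlc hχ (ϖ ^ n) := Module.Basis.mk_apply _ _ n
  refine mapHasIndex_of_shift_sub_one b fun n => ?_
  rw [hb, hb, subOneOnInvariants_charOnShellInvariant, zpow_sub_one]

end SRep

/-! ### Whittaker functionals -/

section Conductor

variable {K : Type*} [NontriviallyNormedField K]

/-- An element `t` of minimal norm outside the kernel of `ψ`: it normalises the duality under which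
the annihilator of the closed ball of radius `r` is the open ball of radius `‖t‖ / r`. -/
structure IsConductor (ψ : AddChar K ℂ) (t : K) : Prop where
  apply_ne_one : ψ t ≠ 1
  apply_eq_one_of_norm_lt {x : K} : ‖x‖ < ‖t‖ → ψ x = 1

lemma exists_isConductor [ProperSpace K] {ψ : AddChar K ℂ} (hψlc : IsLocallyConstant ψ)
    (hψne : ψ ≠ 1) : ∃ t, IsConductor ψ t := by
  obtain ⟨x, hx⟩ : {x | ψ x ≠ 1}.Nonempty := AddChar.ne_one_iff.1 hψne
  have hclosed : IsClosed {x | ψ x ≠ 1} := (hψlc {1}).isClosed_compl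
  obtain ⟨t, ht, hmin⟩ := hclosed.exists_infDist_eq_dist ⟨x, hx⟩ 0
  refine ⟨t, ht, fun {y} hy => by_contra fun hne => hy.not_ge ?_⟩
  have hle := Metric.infDist_le_dist_of_mem (x := 0) (show y ∈ {x | ψ x ≠ 1} from hne)
  rwa [hmin, dist_zero_left, dist_zero_left] at hle

variable {ψ : AddChar K ℂ} {t : K}

lemma IsConductor.norm_pos (ht : IsConductor ψ t) : 0 < ‖t‖ :=
  norm_pos_iff.2 fun h => ht.apply_ne_one (h ▸ ψ.map_zero_eq_one)

lemma IsConductor.apply_mul_eq_one (ht : IsConductor ψ t) {a b : K} {r : ℝ} (ha : ‖a‖ * r < ‖t‖)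
    (hb : ‖b‖ ≤ r) : ψ (a * b) = 1 :=
  ht.apply_eq_one_of_norm_lt <|
    norm_mul a b ▸ (mul_le_mul_of_nonneg_left hb (norm_nonneg a)).trans_lt ha

lemma IsConductor.exists_apply_mul_ne_one (ht : IsConductor ψ t) {b : K} {r : ℝ} (hr : 0 ≤ r)
    (hb : r < ‖b‖) : ∃ a : K, ‖a‖ * r < ‖t‖ ∧ ψ (a * b) ≠ 1 := by
  have hb0 : 0 < ‖b‖ := hr.trans_lt hb
  refine ⟨t / b, ?_, ?_⟩
  · rw [norm_div, div_mul_eq_mul_div, div_lt_iff₀ hb0]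
    exact mul_lt_mul_of_pos_left hb ht.norm_pos
  · rw [div_mul_cancel₀ t (norm_pos_iff.1 hb0)]
    exact ht.apply_ne_one

lemma IsConductor.exists_norm_le_apply_mul_ne_one (ht : IsConductor ψ t) {a : K} {r : ℝ}
    (ha : ¬‖a‖ * r < ‖t‖) : ∃ b : K, ‖b‖ ≤ r ∧ ψ (a * b) ≠ 1 := by
  have ha0 : 0 < ‖a‖ := norm_pos_iff.2 fun h => ha <| by
    rw [h, norm_zero, zero_mul]
    exact ht.norm_pos
  refine ⟨t / a, ?_, ?_⟩
  · rw [norm_div, div_le_iff₀' ha0]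
    exact not_lt.1 ha
  · rw [mul_div_cancel₀ t (norm_pos_iff.1 ha0)]
    exact ht.apply_ne_one

/-- The self-duality `a ↦ (b ↦ ψ (a b))` of the additive group. -/
def dualChar (ψ : AddChar K ℂ) : Multiplicative K →* (Multiplicative K →* ℂˣ) where
  toFun a := (ψ.mulShift a.toAdd).toMonoidHom.toHomUnits
  map_one' := MonoidHom.ext fun b => Units.ext <|
    (congrArg ψ (zero_mul b.toAdd)).trans ψ.map_zero_eq_one
  map_mul' a a' := MonoidHom.ext fun b => Units.ext <|
    (congrArg ψ (add_mul a.toAdd a'.toAdd b.toAdd)).trans (ψ.map_add_eq_mul _ _)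

lemma dualChar_apply (a b : Multiplicative K) :
    (dualChar ψ a b : ℂ) = ψ (a.toAdd * b.toAdd) := rfl

lemma dualChar_apply_eq_one_iff {a b : Multiplicative K} :
    dualChar ψ a b = 1 ↔ ψ (a.toAdd * b.toAdd) = 1 := Units.ext_iff

lemma dualChar_eventually_eq_one (hψlc : IsLocallyConstant ψ) (a : Multiplicative K) :
    ∀ᶠ b in nhds 1, dualChar ψ a b = 1 := by
  have htendsto : Filter.Tendsto (fun b : Multiplicative K => a.toAdd * b.toAdd)
      (nhds 1) (nhds 0) :=
    (continuous_const.mul continuous_toAdd).tendsto' _ _ (mul_zero _)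
  filter_upwards [htendsto.eventually (hψlc.eventually_eq 0)] with b hb
  rw [dualChar_apply_eq_one_iff, hb, ψ.map_zero_eq_one]

variable [IsUltrametricDist K]

/-- The closed ball `{b | ‖b‖ ≤ r}`, as a subgroup of the multiplicatively written `(K, +)`. -/
def closedBallSubgroup (K : Type*) [NontriviallyNormedField K] [IsUltrametricDist K] {r : ℝ}
    (hr : 0 < r) : Subgroup (Multiplicative K) :=
  (IsUltrametricDist.closedBall_openAddSubgroup K hr).toAddSubgroup.toSubgroup

@[simp] lemma mem_closedBallSubgroup {r : ℝ} {hr : 0 < r} {b : Multiplicative K} :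
    b ∈ closedBallSubgroup K hr ↔ ‖b.toAdd‖ ≤ r := mem_closedBall_zero_iff (E := K)

lemma isOpen_closedBallSubgroup {r : ℝ} (hr : 0 < r) :
    IsOpen (closedBallSubgroup K hr : Set (Multiplicative K)) :=
  (IsUltrametricDist.closedBall_openAddSubgroup K hr).isOpen

instance [ProperSpace K] {r : ℝ} (hr : 0 < r) : CompactSpace (closedBallSubgroup K hr) :=
  isCompact_iff_compactSpace.1 <| by
    have hball : (closedBallSubgroup K hr : Set (Multiplicative K)) =
        Multiplicative.toAdd ⁻¹' Metric.closedBall 0 r := Set.ext fun b => by simp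
    rw [hball]
    exact isCompact_closedBall (0 : K) r

lemma exists_closedBallSubgroup_le {L : Subgroup (Multiplicative K)}
    (hL : ∀ᶠ b in nhds 1, b ∈ L) :
    ∃ (r : ℝ) (hr : 0 < r), closedBallSubgroup K hr ≤ L := by
  obtain ⟨r, hr, hball⟩ := Metric.nhds_basis_closedBall.mem_iff.1
    (show Multiplicative.ofAdd ⁻¹' (L : Set (Multiplicative K)) ∈ nhds (0 : K) from hL)
  exact ⟨r, hr, fun b hb => hball (mem_closedBall_zero_iff.2 (mem_closedBallSubgroup.1 hb))⟩

lemma IsConductor.closedBallSubgroup_le_repStabilizer [ProperSpace K] {V : Type*} [AddCommGroup V]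
    [Module ℂ V] (ht : IsConductor ψ t) {τ : Representation ℂ (Multiplicative K) V}
    (hτ : IsSmooth τ) {r s R : ℝ} {hr : 0 < r} {hs : 0 < s} {hR : 0 < R} (hsR : s ≤ R)
    {v : V} (hv : closedBallSubgroup K hr ≤ repStabilizer τ v)
    (hcoinv : ∀ a, ‖a.toAdd‖ ∈ Set.Ico (‖t‖ / s) (‖t‖ / r) → v ∈ Representation.Coinvariants.ker
      ((twist τ (dualChar ψ a)).comp (closedBallSubgroup K hR).subtype)) :
    closedBallSubgroup K hs ≤ repStabilizer τ v := by
  let B := closedBallSubgroup K hR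
  let dual := (MonoidHom.compHom' B.subtype).comp (dualChar ψ)
  let D : Subgroup (B →* ℂˣ) := (IsUltrametricDist.ball_openAddSubgroup K
    (div_pos ht.norm_pos hr)).toAddSubgroup.toSubgroup.map dual
  let N := (closedBallSubgroup K hr).subgroupOf B
  let M := (closedBallSubgroup K hs).subgroupOf B
  have hmem {q : ℝ} (hq : 0 < q) {b : B} :
      b ∈ (closedBallSubgroup K hq).subgroupOf B ↔ ‖(b : Multiplicative K).toAdd‖ ≤ q :=
    mem_closedBall_zero_iff (E := K)
  have hmemD {a : Multiplicative K} (ha : ‖a.toAdd‖ * r < ‖t‖) : dual a ∈ D :=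
    ⟨a, (mem_ball_zero_iff (E := K)).2 ((lt_div_iff₀ hr).2 ha), rfl⟩
  have hofD {θ : B →* ℂˣ} (hθ : θ ∈ D) : ∃ a, ‖a.toAdd‖ < ‖t‖ / r ∧ dual a = θ := by
    obtain ⟨a, ha, rfl⟩ := hθ
    exact ⟨a, (mem_ball_zero_iff (E := K)).1 ha, rfl⟩
  have : N.FiniteIndex :=
    have := Subgroup.quotient_finite_of_isOpen N
      ((isOpen_closedBallSubgroup hr).preimage continuous_subtype_val)
    Subgroup.finiteIndex_of_finite_quotient
  have hle : M ≤ repStabilizer (τ.comp B.subtype) v := by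
    refine le_repStabilizer_of_characters
      (hτ.comp continuous_subtype_val).finiteIndex_repStabilizer D N M (fun θ hθ b hb => ?_)
      (fun b hb => ?_) (fun b hb => hv hb) fun θ hθ => ?_
    · obtain ⟨a, ha, rfl⟩ := hofD hθ
      exact dualChar_apply_eq_one_iff.2 (ht.apply_mul_eq_one ((lt_div_iff₀ hr).1 ha)
        ((hmem hr).1 hb))
    · obtain ⟨a, ha, hne⟩ := ht.exists_apply_mul_ne_one hr.le
        (not_le.1 ((hmem hr).not.1 hb))
      exact ⟨_, hmemD (a := .ofAdd a) ha, dualChar_apply_eq_one_iff.not.2 hne⟩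
    · obtain ⟨a, ha, rfl⟩ := hofD hθ
      obtain hlt | hge := lt_or_ge ‖a.toAdd‖ (‖t‖ / s)
      · exact .inl fun b hb => dualChar_apply_eq_one_iff.2
          (ht.apply_mul_eq_one ((lt_div_iff₀ hs).1 hlt) ((hmem hs).1 hb))
      · exact .inr (hcoinv a ⟨hge, ha⟩)
  exact fun b hb => hle (x := ⟨b, le_trans hb hsR⟩) hb

end Conductor

section Whittaker

open Aff

variable {K : Type*} [NontriviallyNormedField K] {ψ : AddChar K ℂ} {t : K} {V : Type*}
  [AddCommGroup V] [Module ℂ V]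

section Spectrum

variable [IsUltrametricDist K] {τ : Representation ℂ (Multiplicative K) V}

lemma IsConductor.twist_dualChar_comp_congr (ht : IsConductor ψ t) {R : ℝ} (hR : 0 < R)
    {a a' : Multiplicative K} (h : ‖a'.toAdd - a.toAdd‖ < ‖t‖ / R) :
    (twist τ (dualChar ψ a')).comp (closedBallSubgroup K hR).subtype =
      (twist τ (dualChar ψ a)).comp (closedBallSubgroup K hR).subtype := by
  refine MonoidHom.ext fun b => LinearMap.ext fun v => ?_
  have hone : dualChar ψ (a' / a) b = 1 := dualChar_apply_eq_one_iff.2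
    (ht.apply_mul_eq_one ((lt_div_iff₀ hR).1 h) (mem_closedBallSubgroup.1 b.2))
  have hchar : dualChar ψ a' b = dualChar ψ a b := by
    rwa [map_div, MonoidHom.div_apply, div_eq_one] at hone
  change (dualChar ψ a' b)⁻¹ • τ b v = (dualChar ψ a b)⁻¹ • τ b v
  rw [hchar]

lemma IsConductor.isClosed_setOf_notMem_coinvariantsKer (ht : IsConductor ψ t) {R : ℝ}
    (hR : 0 < R) (v : V) :
    IsClosed {a : K | v ∉ Representation.Coinvariants.ker
      ((twist τ (dualChar ψ (.ofAdd a))).comp (closedBallSubgroup K hR).subtype)} := by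
  refine ⟨Metric.isOpen_iff.2 fun a ha =>
    ⟨‖t‖ / R, div_pos ht.norm_pos hR, fun a' ha' hmem => hmem ?_⟩⟩
  rw [ht.twist_dualChar_comp_congr hR (a := .ofAdd a) (a' := .ofAdd a')
    (mem_ball_iff_norm.1 ha')]
  exact not_not.1 ha

/-- If on some large ball no nontrivial character survived, `v` would be fixed by `b`; compactness
of the annulus of characters that can contribute then lets one survive on all balls at once. -/
lemma IsConductor.exists_notMem_coinvariantsKer_twist [ProperSpace K] (ht : IsConductor ψ t)
    (hτ : IsSmooth τ) {v : V} {b : Multiplicative K} (hb : τ b v ≠ v) :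
    ∃ a : K, a ≠ 0 ∧ v ∉ Representation.Coinvariants.ker (twist τ (dualChar ψ (.ofAdd a))) := by
  obtain ⟨r, hr, hrv⟩ := exists_closedBallSubgroup_le (L := repStabilizer τ v) (hτ v)
  have hs : 0 < ‖b.toAdd‖ := norm_pos_iff.2 fun h => hb <| by
    rw [show b = 1 from h, map_one, Module.End.one_apply]
  set s := ‖b.toAdd‖
  have hpos (k : ℕ) : 0 < s + k := by positivity
  let Annulus : Set K := {a | ‖a‖ ∈ Set.Icc (‖t‖ / s) (‖t‖ / r)}
  let Survivors (k : ℕ) : Set K := {a | v ∉ Representation.Coinvariants.ker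
    ((twist τ (dualChar ψ (.ofAdd a))).comp (closedBallSubgroup K (hpos k)).subtype)}
  have hmono : Monotone fun k : ℕ => closedBallSubgroup K (hpos k) := fun k l hkl x hx =>
    mem_closedBallSubgroup.2 <| (mem_closedBallSubgroup.1 hx).trans (by gcongr)
  have hnonempty (k : ℕ) : (Annulus ∩ Survivors k).Nonempty := by
    by_contra hempty
    have hfix := ht.closedBallSubgroup_le_repStabilizer hτ (hr := hr) (hs := hs) (hR := hpos k)
      (by simp) hrv fun a ha => not_not.1 fun hv => hempty ⟨a.toAdd, ⟨ha.1, ha.2.le⟩, hv⟩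
    exact hb (hfix (mem_closedBallSubgroup.2 le_rfl))
  have hclosed (k : ℕ) : IsClosed (Annulus ∩ Survivors k) :=
    (isClosed_Icc.preimage continuous_norm).inter (ht.isClosed_setOf_notMem_coinvariantsKer _ v)
  have hcompact : IsCompact (Annulus ∩ Survivors 0) :=
    (isCompact_closedBall 0 (‖t‖ / r)).of_isClosed_subset (hclosed 0) fun a ha =>
      mem_closedBall_zero_iff.2 ha.1.2
  have hanti (k : ℕ) : Survivors (k + 1) ⊆ Survivors k := fun a ha hmem =>
    ha (coinvariantsKer_comp_subtype_mono (hmono k.le_succ) hmem)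
  obtain ⟨a, ha⟩ := IsCompact.nonempty_iInter_of_sequence_nonempty_isCompact_isClosed _
    (fun k => Set.inter_subset_inter_right Annulus (hanti k)) hnonempty hcompact hclosed
  rw [Set.mem_iInter] at ha
  refine ⟨a, norm_pos_iff.1 ((div_pos ht.norm_pos hs).trans_le (ha 0).1.1), fun hmem => ?_⟩
  have hexhaust (x : Multiplicative K) : ∃ k : ℕ, x ∈ closedBallSubgroup K (hpos k) :=
    (exists_nat_ge ‖x.toAdd‖).imp fun k hk =>
      mem_closedBallSubgroup.2 (hk.trans (le_add_of_nonneg_left hs.le))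
  obtain ⟨k, hk⟩ := exists_mem_coinvariantsKer_comp_subtype hmono hexhaust hmem
  exact (ha k).2 hk

end Spectrum

/-- A Whittaker functional: a linear form on which `S` acts through `ψ`. -/
def IsWhittaker (ψ : AddChar K ℂ) (ρ : Rep K V) (l : V →ₗ[ℂ] ℂ) : Prop :=
  ∀ b v, l (ρ (sS b) v) = ψ b * l v

lemma exists_apply_eq_of_notMem_coinvariantsKer_twist {H : Type*} [Group H]
    {τ : Representation ℂ H V} {θ : H →* ℂˣ} {v : V}
    (hv : v ∉ Representation.Coinvariants.ker (twist τ θ)) :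
    ∃ φ : V →ₗ[ℂ] ℂ, φ v ≠ 0 ∧ ∀ h w, φ (τ h w) = θ h * φ w := by
  obtain ⟨φ, hφv, hφ⟩ := Submodule.exists_le_ker_of_notMem hv
  refine ⟨φ, hφv, fun h w => ?_⟩
  rw [coinvariantsKer_twist] at hφ
  have hzero : φ (τ h w - (θ h : ℂ) • w) = 0 := hφ (Submodule.subset_span ⟨h, w, rfl⟩)
  rwa [map_sub, map_smul, smul_eq_mul, sub_eq_zero] at hzero

lemma exists_isWhittaker [IsUltrametricDist K] [ProperSpace K] (hψlc : IsLocallyConstant ψ)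
    (hψne : ψ ≠ 1) {ρ : Rep K V} (hρ : IsSmooth ρ) {b : K} {v : V} (hb : ρ (sS b) v ≠ v) :
    ∃ l ≠ 0, IsWhittaker ψ ρ l := by
  obtain ⟨t, ht⟩ := exists_isConductor hψlc hψne
  obtain ⟨a, ha, hv⟩ := ht.exists_notMem_coinvariantsKer_twist (hρ.comp continuous_sSHom)
    (b := .ofAdd b) hb
  obtain ⟨φ, hφv, hφ⟩ := exists_apply_eq_of_notMem_coinvariantsKer_twist hv
  let u := Units.mk0 a ha
  refine ⟨φ ∘ₗ ρ (xT u⁻¹), fun hzero => hφv ?_, fun c w => ?_⟩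
  · have happly := LinearMap.congr_fun hzero (ρ (xT u) v)
    have hone : xT u⁻¹ * xT u = (1 : Aff K) :=
      (map_mul xTHom u⁻¹ u).symm.trans <| by rw [inv_mul_cancel, map_one]
    rwa [LinearMap.comp_apply, ← Module.End.mul_apply, ← map_mul, hone, map_one] at happly
  · have hswap : ρ (xT u⁻¹) (ρ (sS c) w) = ρ (sS (a⁻¹ * c)) (ρ (xT u⁻¹) w) := by
      rw [← Module.End.mul_apply, ← map_mul, mul_sS, map_mul, Module.End.mul_apply]
      simp [u]
    have hval := hφ (.ofAdd (a⁻¹ * c)) (ρ (xT u⁻¹) w)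
    rw [dualChar_apply, toAdd_ofAdd, toAdd_ofAdd, mul_inv_cancel_left₀ ha] at hval
    rw [LinearMap.comp_apply, hswap]
    exact hval

end Whittaker

/-! ### Irreducibility of `𝕊` -/

section Irreducibility

open Topology Aff

lemma mem_of_forall_exists_indicator_mem {X k : Type*} [TopologicalSpace X] [Field k]
    {U : Submodule k (X → k)} {g : X → k} (hg : HasCompactSupport g)
    (hU : ∀ x, ∃ A ∈ 𝓝 x, (∀ f ∈ U, A.indicator f ∈ U) ∧ A.indicator g ∈ U) : g ∈ U := by
  have hunion (A B : Set X) (f : X → k) :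
      (A ∪ B).indicator f = A.indicator f + B.indicator f - A.indicator (B.indicator f) := by
    rw [Set.indicator_indicator, eq_sub_iff_add_eq]
    exact funext fun x => Set.indicator_union_add_inter_apply f A B x
  obtain ⟨A, hA, -, hgA⟩ := hg.isCompact.induction_on
    (p := fun s => ∃ A ⊇ s, (∀ f ∈ U, A.indicator f ∈ U) ∧ A.indicator g ∈ U)
    ⟨∅, subset_rfl, fun f _ => (Set.indicator_empty f).symm ▸ U.zero_mem,
      (Set.indicator_empty g).symm ▸ U.zero_mem⟩
    (fun s s' hs ⟨A, hA, h⟩ => ⟨A, hs.trans hA, h⟩)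
    (fun s s' ⟨A, hA, hUA, hgA⟩ ⟨B, hB, hUB, hgB⟩ => by
      refine ⟨A ∪ B, Set.union_subset_union hA hB, fun f hf => ?_, ?_⟩
      · rw [hunion]
        exact sub_mem (add_mem (hUA f hf) (hUB f hf)) (hUA _ (hUB f hf))
      · rw [hunion]
        exact sub_mem (add_mem hgA hgB) (hUA _ hgB))
    fun x _ => let ⟨A, hA, h⟩ := hU x; ⟨A, mem_nhdsWithin_of_mem_nhds hA, A, subset_rfl, h⟩
  rwa [Set.indicator_eq_self.2 ((subset_tsupport g).trans hA)] at hgA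

variable {K : Type*} [NontriviallyNormedField K] {ψ : AddChar K ℂ} {t : K}
  (hψlc : IsLocallyConstant ψ)

lemma SRep_sS_apply (b : K) (f : SSx K) (x : Kˣ) :
    (SRep ψ hψlc (sS b) f : Kˣ → ℂ) x = ψ (b * x) * (f : Kˣ → ℂ) x := by
  change ψ (b * x) * (f : Kˣ → ℂ) (x * 1) = _
  rw [mul_one]

lemma twist_SRep_comp_sSHom_apply (a b : Multiplicative K) (f : SSx K) (x : Kˣ) :
    (twist ((SRep ψ hψlc).comp sSHom) (dualChar ψ a) b f : Kˣ → ℂ) x =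
      ψ (((x : K) - a.toAdd) * b.toAdd) * (f : Kˣ → ℂ) x := by
  change ((dualChar ψ a b)⁻¹ : ℂˣ) * (SRep ψ hψlc (sS b.toAdd) f : Kˣ → ℂ) x = _
  rw [SRep_sS_apply, Units.val_inv_eq_inv_val, dualChar_apply, ← AddChar.map_neg_eq_inv,
    ← mul_assoc, ← AddChar.map_add_eq_mul]
  ring_nf

lemma isSmooth_SRep_comp_sSHom : IsSmooth ((SRep ψ hψlc).comp sSHom) := fun f => by
  have htrivial : ∀ᶠ b in 𝓝 (1 : Multiplicative K), ∀ x ∈ tsupport (f : Kˣ → ℂ),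
      ψ (b.toAdd * (x : K)) = 1 := by
    refine f.2.2.isCompact.eventually_forall_of_forall_eventually fun x _ => ?_
    have htendsto : Filter.Tendsto (fun p : Multiplicative K × Kˣ => p.1.toAdd * (p.2 : K))
        (𝓝 (1, x)) (𝓝 0) :=
      ((continuous_toAdd.comp continuous_fst).mul
        (Units.continuous_val.comp continuous_snd)).tendsto' _ _ (zero_mul _)
    filter_upwards [htendsto.eventually (hψlc.eventually_eq 0)] with p hp
    rw [hp, ψ.map_zero_eq_one]
  filter_upwards [htrivial] with b hb
  refine Subtype.ext (funext fun x => (SRep_sS_apply hψlc b.toAdd f x).trans ?_)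
  by_cases hx : x ∈ tsupport (f : Kˣ → ℂ)
  · rw [hb x hx, one_mul]
  · rw [image_eq_zero_of_notMem_tsupport hx, mul_zero]

variable [IsUltrametricDist K] [ProperSpace K]

/-- The indicator function of a disc is an average of characters `x ↦ ψ (b (x - a))`, `b` in a
ball. -/
lemma IsConductor.exists_mem_eq_indicator (ht : IsConductor ψ t) {U : Submodule ℂ (SSx K)}
    (hU : GRep.Invariant (SRep ψ hψlc) U) {f : SSx K} (hf : f ∈ U) (a : K) {δ : ℝ} (hδ : 0 < δ) :
    ∃ g ∈ U, (g : Kˣ → ℂ) = {x : Kˣ | ‖(x : K) - a‖ < δ}.indicator f := by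
  let B := closedBallSubgroup K (div_pos ht.norm_pos hδ)
  let τ : Representation ℂ B (SSx K) :=
    (twist ((SRep ψ hψlc).comp sSHom) (dualChar ψ (.ofAdd a))).comp B.subtype
  have hτ (b : B) (h : SSx K) (x : Kˣ) :
      (τ b h : Kˣ → ℂ) x = ψ (((x : K) - a) * b.1.toAdd) * (h : Kˣ → ℂ) x :=
    twist_SRep_comp_sSHom_apply hψlc (.ofAdd a) b h x
  have hsmooth : IsSmooth τ := ((isSmooth_SRep_comp_sSHom hψlc).twist
    (dualChar_eventually_eq_one hψlc (.ofAdd a))).comp continuous_subtype_val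
  have := hsmooth.finiteIndex_repStabilizer f
  set g := cosetAverage τ (repStabilizer τ f) f
  have hτU (b : B) (h : SSx K) (hh : h ∈ U) : τ b h ∈ U := U.smul_mem _ (hU _ h hh)
  have hinv : g ∈ τ.invariants := cosetAverage_mem_invariants le_rfl
  have hcoinv : f - g ∈ Representation.Coinvariants.ker τ :=
    sub_cosetAverage_mem_coinvariantsKer _ f
  refine ⟨g, cosetAverage_mem _ hτU hf, funext fun x => ?_⟩
  have hdual : ‖(x : K) - a‖ * (‖t‖ / δ) < ‖t‖ ↔ ‖(x : K) - a‖ < δ := by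
    rw [mul_div_left_comm, mul_lt_iff_lt_one_right ht.norm_pos, div_lt_one hδ]
  by_cases hx : ‖(x : K) - a‖ < δ
  · have heval : Representation.Coinvariants.ker τ ≤
        LinearMap.ker (LinearMap.proj x ∘ₗ (SSx K).subtype) := by
      refine Submodule.span_le.2 ?_
      rintro _ ⟨⟨b, h⟩, rfl⟩
      have hone : ψ (((x : K) - a) * b.1.toAdd) = 1 :=
        ht.apply_mul_eq_one (hdual.2 hx) (mem_closedBallSubgroup.1 b.2)
      change (τ b h : Kˣ → ℂ) x - (h : Kˣ → ℂ) x = 0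
      rw [hτ, hone, one_mul, sub_self]
    rw [Set.indicator_of_mem (by exact hx)]
    exact (sub_eq_zero.1 (heval hcoinv)).symm
  · rw [Set.indicator_of_notMem (by exact hx)]
    obtain ⟨b, hb, hne⟩ := ht.exists_norm_le_apply_mul_ne_one (hdual.not.2 hx)
    have hfix := congrFun (congrArg Subtype.val (hinv ⟨.ofAdd b, mem_closedBallSubgroup.2 hb⟩)) x
    rw [hτ] at hfix
    exact (mul_left_eq_self₀.1 hfix).resolve_left hne

lemma nontrivial_SSx : Nontrivial (SSx K) := by
  refine ⟨⟨charOnShell 1 1, charOnShell_mem_SSx (χ := 1) (by simp [SmoothMulChar]) 1⟩, 0,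
    fun h => ?_⟩
  have heval := congrFun (congrArg Subtype.val h) 1
  simp [charOnShell] at heval

lemma irred_SRep (hψne : ψ ≠ 1) : GRep.Irred (SRep ψ hψlc) := by
  obtain ⟨t, ht⟩ := exists_isConductor hψlc hψne
  refine ⟨nontrivial_SSx, fun U hU => or_iff_not_imp_left.2 fun hne => eq_top_iff.2 fun g _ => ?_⟩
  obtain ⟨f, hf, hf0⟩ := U.ne_bot_iff.1 hne
  obtain ⟨x₀, hx₀⟩ := Function.ne_iff.1 (Subtype.coe_injective.ne hf0)
  suffices (g : Kˣ → ℂ) ∈ U.map (SSx K).subtype by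
    obtain ⟨g', hg', heq⟩ := this
    exact Subtype.coe_injective heq ▸ hg'
  let D (x : Kˣ) (δ : ℝ) : Set Kˣ := {y | ‖(y : K) - x‖ < δ}
  have hcut (x : Kˣ) {δ : ℝ} (hδ : 0 < δ) (h : Kˣ → ℂ) (hh : h ∈ U.map (SSx K).subtype) :
      (D x δ).indicator h ∈ U.map (SSx K).subtype := by
    obtain ⟨h, hh, rfl⟩ := hh
    exact ht.exists_mem_eq_indicator hψlc hU hh x hδ
  refine mem_of_forall_exists_indicator_mem g.2.2 fun x => ?_
  let f₁ := SRep ψ hψlc (xT (x⁻¹ * x₀)) f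
  have hf₁ : (f₁ : Kˣ → ℂ) x ≠ 0 := by
    rwa [SRep_xT_apply, mul_inv_cancel_left]
  have hconst := (f₁.2.1.eventually_eq x).and (g.2.1.eventually_eq x)
  rw [Units.isEmbedding_val₀.nhds_eq_comap, Filter.eventually_comap] at hconst
  obtain ⟨δ, hδ, hdisc⟩ := Metric.eventually_nhds_iff.1 hconst
  have hD : D x δ ∈ 𝓝 x :=
    (isOpen_lt (Units.continuous_val.sub continuous_const).norm continuous_const).mem_nhds
      (by simpa using hδ)
  refine ⟨D x δ, hD, hcut x hδ, ?_⟩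
  set c := (g : Kˣ → ℂ) x / (f₁ : Kˣ → ℂ) x
  have hproportional : (D x δ).indicator (g : Kˣ → ℂ) = c • (D x δ).indicator (f₁ : Kˣ → ℂ) := by
    refine .trans (b := (D x δ).indicator fun y => c • (f₁ : Kˣ → ℂ) y)
      (Set.indicator_congr fun y hy => ?_) (Set.indicator_const_smul _ _ _)
    obtain ⟨hfy, hgy⟩ := hdisc (mem_ball_iff_norm.2 hy) y rfl
    rw [hgy, hfy, smul_eq_mul, div_mul_cancel₀ _ hf₁]
  rw [hproportional]
  exact Submodule.smul_mem _ _ (hcut x hδ _ ⟨f₁, hU _ f hf, rfl⟩)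

end Irreducibility

/-! ### Kirillov models -/

section Kirillov

open Topology Aff

lemma iso_of_equivariant_ne_zero {G V W : Type*} [Monoid G] [AddCommGroup V]
    [Module ℂ V] [AddCommGroup W] [Module ℂ W] {σ : Representation ℂ G V} {τ : Representation ℂ G W}
    (hσ : GRep.Irred σ) (hτ : GRep.Irred τ) {f : V →ₗ[ℂ] W} (hf : GRep.Equivariant σ τ f)
    (hne : f ≠ 0) : GRep.Iso σ τ := by
  have hker := (hσ.2 _ (GRep.ker_invariant σ τ f hf)).resolve_right fun h =>
    hne (LinearMap.ker_eq_top.1 h)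
  have hrange := (hτ.2 _ (GRep.range_invariant σ τ f hf)).resolve_left fun h =>
    hne (LinearMap.range_eq_bot.1 h)
  exact ⟨.ofBijective f ⟨LinearMap.ker_eq_bot.1 hker, LinearMap.range_eq_top.1 hrange⟩, hf⟩

variable {K : Type*} [NontriviallyNormedField K] {V : Type*} [AddCommGroup V] [Module ℂ V]

/-- The model of `ρ` attached to a linear form `l`: the vector `v` becomes the function
`x ↦ l (x · v)` on the torus. It is a Kirillov model when `l` is a Whittaker functional. -/
def kirillovMap (ρ : Rep K V) (l : V →ₗ[ℂ] ℂ) : V →ₗ[ℂ] (Kˣ → ℂ) :=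
  LinearMap.pi fun x => l ∘ₗ ρ (xT x)

lemma kirillovMap_apply (ρ : Rep K V) (l : V →ₗ[ℂ] ℂ) (v : V) (x : Kˣ) :
    kirillovMap ρ l v x = l (ρ (xT x) v) := rfl

lemma kirillovMap_xT (ρ : Rep K V) (l : V →ₗ[ℂ] ℂ) (u : Kˣ) (v : V) (x : Kˣ) :
    kirillovMap ρ l (ρ (xT u) v) x = kirillovMap ρ l v (x * u) := by
  have hmul : xT x * xT u = (xT (x * u) : Aff K) := (map_mul xTHom x u).symm
  rw [kirillovMap_apply, kirillovMap_apply, ← Module.End.mul_apply, ← map_mul, hmul]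

lemma kirillovMap_ne_zero {ρ : Rep K V} {l : V →ₗ[ℂ] ℂ} (hl : l ≠ 0) : kirillovMap ρ l ≠ 0 := by
  obtain ⟨v, hv⟩ := DFunLike.ne_iff.1 hl
  refine fun hzero => hv ?_
  have hone : kirillovMap ρ l v 1 = l (ρ 1 v) := rfl
  rwa [hzero, map_one, Module.End.one_apply, eq_comm] at hone

variable {ρ : Rep K V} {ψ : AddChar K ℂ} {l : V →ₗ[ℂ] ℂ}

lemma IsWhittaker.kirillovMap_sS (hl : IsWhittaker ψ ρ l) (b : K) (v : V) (x : Kˣ) :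
    kirillovMap ρ l (ρ (sS b) v) x = ψ (b * x) * kirillovMap ρ l v x := by
  rw [kirillovMap_apply, kirillovMap_apply, ← Module.End.mul_apply, ← map_mul, mul_sS, map_mul,
    Module.End.mul_apply, hl, mul_comm b]
  rfl

lemma IsWhittaker.equivariant_kirillovMap (hl : IsWhittaker ψ ρ l) :
    GRep.Equivariant ρ (repCx K ψ) (kirillovMap ρ l) := fun g v => by
  have hg : g = sS g.s * xT g.t := by ext <;> simp [sS, xT]
  funext x
  rw [repCx_apply, ← kirillovMap_xT, ← hl.kirillovMap_sS, ← Module.End.mul_apply, ← map_mul, ← hg]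

lemma isLocallyConstant_kirillovMap (hρ : IsSmooth ρ) (v : V) :
    IsLocallyConstant (kirillovMap ρ l v) := by
  refine isLocallyConstant_of_eventually_mul fun x => ?_
  filter_upwards [hρ.comp continuous_xTHom v] with u hu
  rw [← kirillovMap_xT]
  exact congrArg (fun w => kirillovMap ρ l w x) hu

lemma IsWhittaker.kirillovMap_eventually_eq_zero (hl : IsWhittaker ψ ρ l)
    (hψlc : IsLocallyConstant ψ) {v : V} (hv : v ∈ sCoinvKer ρ) :
    ∀ᶠ x in Filter.comap ((↑) : Kˣ → K) (𝓝 0), kirillovMap ρ l v x = 0 := by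
  refine Submodule.span_induction ?_ ?_ ?_ ?_ hv
  · rintro _ ⟨b, w, rfl⟩
    have htendsto : Filter.Tendsto (fun x : Kˣ => b * (x : K))
        (Filter.comap ((↑) : Kˣ → K) (𝓝 0)) (𝓝 0) :=
      ((continuous_const_mul b).tendsto' 0 0 (mul_zero b)).comp Filter.tendsto_comap
    filter_upwards [htendsto.eventually (hψlc.eventually_eq 0)] with x hx
    rw [map_sub, Pi.sub_apply, hl.kirillovMap_sS, hx, ψ.map_zero_eq_one, one_mul, sub_self]
  · simp
  · intro v w _ _ hv hw
    filter_upwards [hv, hw] with x hvx hwx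
    rw [map_add, Pi.add_apply, hvx, hwx, add_zero]
  · intro c v _ hv
    filter_upwards [hv] with x hvx
    rw [map_smul, Pi.smul_apply, hvx, smul_zero]

variable [IsUltrametricDist K]

lemma IsWhittaker.exists_forall_norm_le (hl : IsWhittaker ψ ρ l) {t : K} (ht : IsConductor ψ t)
    (hρ : IsSmooth ρ) (v : V) : ∃ R, ∀ x : Kˣ, kirillovMap ρ l v x ≠ 0 → ‖(x : K)‖ ≤ R := by
  obtain ⟨r, hr, hfix⟩ := exists_closedBallSubgroup_le
    (L := repStabilizer (ρ.comp sSHom) v) (hρ.comp continuous_sSHom v)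
  refine ⟨‖t‖ / r, fun x hx => (le_div_iff₀ hr).2 (not_lt.1 fun hlt => ?_)⟩
  obtain ⟨b, hb, hne⟩ := ht.exists_norm_le_apply_mul_ne_one (not_lt.2 hlt.le)
  have hstab : ρ (sS b) v = v := hfix (x := .ofAdd b) (mem_closedBallSubgroup.2 hb)
  have heigen := hl.kirillovMap_sS b v x
  rw [hstab, eq_comm, mul_eq_right₀ hx, mul_comm] at heigen
  exact hne heigen

variable [ProperSpace K]

lemma IsWhittaker.kirillovMap_mem_SSx (hl : IsWhittaker ψ ρ l) (hψlc : IsLocallyConstant ψ)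
    (hψne : ψ ≠ 1) (hρ : IsSmooth ρ) {v : V} (hv : v ∈ sCoinvKer ρ) :
    kirillovMap ρ l v ∈ SSx K := by
  obtain ⟨t, ht⟩ := exists_isConductor hψlc hψne
  obtain ⟨R, hR⟩ := hl.exists_forall_norm_le ht hρ v
  have hzero := hl.kirillovMap_eventually_eq_zero hψlc hv
  rw [Filter.eventually_comap] at hzero
  obtain ⟨r, hr, hball⟩ := Metric.eventually_nhds_iff.1 hzero
  refine ⟨isLocallyConstant_kirillovMap hρ v,
    HasCompactSupport.intro (isCompact_setOf_norm_mem_Icc hr R) fun x hx => ?_⟩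
  by_contra hne
  refine hx ⟨not_lt.1 fun hlt => hne ?_, hR x hne⟩
  exact hball (by rwa [dist_zero_right]) x rfl

lemma iso_SRep_of_irred (hψlc : IsLocallyConstant ψ) (hψne : ψ ≠ 1) (hρ : IsSmooth ρ)
    (hirr : GRep.Irred ρ) {b : K} {v : V} (hb : ρ (sS b) v ≠ v) :
    GRep.Iso ρ (SRep ψ hψlc) := by
  obtain ⟨l, hl0, hl⟩ := exists_isWhittaker hψlc hψne hρ hb
  have htop : sCoinvKer ρ = ⊤ := by
    refine (hirr.2 _ (sCoinvKer_invariant ρ)).resolve_left fun hbot => hb ?_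
    have hmem : ρ (sS b) v - v ∈ sCoinvKer ρ := Submodule.subset_span ⟨b, v, rfl⟩
    rwa [hbot, Submodule.mem_bot, sub_eq_zero] at hmem
  have hmem (w : V) : kirillovMap ρ l w ∈ SSx K :=
    hl.kirillovMap_mem_SSx hψlc hψne hρ (htop ▸ Submodule.mem_top)
  refine iso_of_equivariant_ne_zero hirr (irred_SRep hψlc hψne)
    (f := (kirillovMap ρ l).codRestrict (SSx K) hmem)
    (fun g w => Subtype.ext (hl.equivariant_kirillovMap g w)) fun hzero => ?_
  refine kirillovMap_ne_zero (ρ := ρ) hl0 (LinearMap.ext fun w => ?_)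
  exact congrArg Subtype.val (LinearMap.congr_fun hzero w)

end Kirillov

/-! ### The index of a representation of finite length -/

section FiniteLength

open Aff

lemma irred_subquot {G V : Type*} [Monoid G] [AddCommGroup V] [Module ℂ V]
    {ρ : Representation ℂ G V} {A B : Submodule ℂ V} (hA : GRep.Invariant ρ A)
    (hB : GRep.Invariant ρ B) (hlt : A < B)
    (hmax : ∀ C, GRep.Invariant ρ C → A ≤ C → C ≤ B → C = A ∨ C = B) :
    GRep.Irred (GRep.subquot ρ hA hB) := by
  let P := A.comap B.subtype
  refine ⟨Submodule.Quotient.nontrivial_iff.2 fun htop => hlt.not_ge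
    (Submodule.comap_subtype_eq_top.1 htop), fun U hU => ?_⟩
  let C := (U.comap P.mkQ).map B.subtype
  have hUC : U = (C.comap B.subtype).map P.mkQ := by
    rw [Submodule.comap_map_eq_of_injective B.injective_subtype,
      Submodule.map_comap_eq_of_surjective P.mkQ_surjective]
  have hC : GRep.Invariant ρ C :=
    GRep.map_invariant (GRep.sub ρ hB) ρ B.subtype (fun _ _ => rfl) _ fun g v hv => hU g _ hv
  have hAC : A ≤ C := by
    rw [← inf_eq_right.2 hlt.le, ← Submodule.map_comap_subtype]
    exact Submodule.map_mono (P.le_comap_mkQ U)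
  refine (hmax C hC hAC (Submodule.map_subtype_le B _)).imp (fun h => ?_) fun h => ?_
  · rw [hUC, h, Submodule.mkQ_map_self]
  · rw [hUC, h, Submodule.comap_subtype_self, Submodule.map_top, Submodule.range_mkQ]

lemma repHasIndex_zero_of_forall_sS_eq {K V : Type*} [Field K] [AddCommGroup V] [Module ℂ V]
    {ρ : Rep K V} (hirr : GRep.Irred ρ) (htriv : ∀ b v, ρ (sS b) v = v) (χ : Kˣ →* ℂˣ) :
    RepHasIndex (twist (ρ.comp xTHom) χ) 0 := by
  refine repHasIndex_zero_of_irred fun U hU => hirr.2 U fun g v hv => ?_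
  have htwist : ρ (xT g.t) v = (χ g.t : ℂ) • twist (ρ.comp xTHom) χ g.t v := by
    rw [twist_apply]
    exact (smul_inv_smul (χ g.t) _).symm
  rw [aff_decomp g, map_mul, Module.End.mul_apply, htriv, htwist]
  exact U.smul_mem _ (hU _ v hv)

variable {K : Type*} [NontriviallyNormedField K] [IsUltrametricDist K] [ProperSpace K]
  {ψ : AddChar K ℂ} (hψlc : IsLocallyConstant ψ) (hψne : ψ ≠ 1) {V : Type*} [AddCommGroup V]
  [Module ℂ V] {ρ : Rep K V} {χ : Kˣ →* ℂˣ} (hχ : SmoothMulChar χ)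
include hψne hχ

lemma repHasIndex_of_irred (hρ : IsSmooth ρ) (hirr : GRep.Irred ρ) :
    RepHasIndex (twist (ρ.comp xTHom) χ) (if GRep.Iso ρ (SRep ψ hψlc) then -1 else 0) := by
  split_ifs with hiso
  · obtain ⟨e, he⟩ := hiso
    refine (repHasIndex_twist_SRep hψlc hχ).congr e.symm fun u f => ?_
    rw [LinearEquiv.symm_apply_eq, twist_apply, twist_apply, Units.smul_def, Units.smul_def,
      map_smul, MonoidHom.comp_apply, MonoidHom.comp_apply, he, e.apply_symm_apply]
  · refine repHasIndex_zero_of_forall_sS_eq hirr (fun b v => ?_) χ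
    by_contra hb
    exact hiso (iso_SRep_of_irred hψlc hψne hρ hirr hb)

lemma CompSeries.repHasIndex_sub (hρ : IsSmooth ρ) (c : CompSeries ρ) {i : ℕ} (hi : i ≤ c.n) :
    RepHasIndex (twist ((GRep.sub ρ (c.inv i)).comp xTHom) χ) (∑ j ∈ Finset.range i,
      if GRep.Iso (GRep.subquot ρ (c.inv j) (c.inv (j + 1))) (SRep ψ hψlc) then -1 else 0) := by
  induction i with
  | zero =>
    have : Subsingleton (c.W 0) := c.bot ▸ inferInstance
    exact repHasIndex_zero_of_irred fun U _ => .inl (Subsingleton.elim _ _)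
  | succ i ih =>
    obtain ⟨ϖ, hϖ⟩ := exists_isUniformizer K
    have hcompl {X : Type _} [AddCommGroup X] [Module ℂ X] {σ : Rep K X} (hσ : IsSmooth σ) :=
      ((hσ.comp continuous_xTHom).twist hχ.eventually_eq_one).isCompl_comp_subtype
        (normOneUnits K)
    have hle : c.W i ≤ c.W (i + 1) := (c.lt i hi).le
    let P := (c.W i).comap (c.W (i + 1)).subtype
    have hsubquot : IsSmooth (GRep.subquot ρ (c.inv i) (c.inv (i + 1))) := (hρ.sub _).quot _
    rw [Finset.sum_range_succ]
    refine RepHasIndex.of_exact hϖ.normOneUnits_sup_zpowers (hcompl (hρ.sub _))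
      (hcompl (hρ.sub _)) (hcompl hsubquot) (i := Submodule.inclusion hle) (p := P.mkQ)
      (fun _ _ => rfl) (fun _ _ => rfl) (Submodule.inclusion_injective hle) P.mkQ_surjective ?_
      (ih (Nat.le_of_succ_le hi)) (repHasIndex_of_irred hψlc hψne hχ hsubquot
        (irred_subquot _ _ (c.lt i hi) (c.maximal i hi)))
    rw [LinearMap.exact_iff, Submodule.ker_mkQ, Submodule.range_inclusion]

lemma CompSeries.repHasIndex (hρ : IsSmooth ρ) (c : CompSeries ρ) :
    RepHasIndex (twist (ρ.comp xTHom) χ) (-c.deg (SRep ψ hψlc)) := by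
  have hdeg : (-c.deg (SRep ψ hψlc) : ℤ) = ∑ j ∈ Finset.range c.n,
      if GRep.Iso (GRep.subquot ρ (c.inv j) (c.inv (j + 1))) (SRep ψ hψlc) then -1 else 0 := by
    rw [CompSeries.deg, Finset.sum_range, Finset.card_filter, Nat.cast_sum,
      ← Finset.sum_neg_distrib]
    exact Finset.sum_congr rfl fun i _ => by split_ifs <;> rfl
  rw [hdeg]
  exact (c.repHasIndex_sub hψlc hψne hχ hρ le_rfl).congr
    ((LinearEquiv.ofEq _ _ c.top).trans Submodule.topEquiv) fun _ _ => rfl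

end FiniteLength

section Statements

open Aff

variable {K : Type*} [NontriviallyNormedField K] [IsUltrametricDist K] [ProperSpace K]

theorem statement7_general
    (ψ : AddChar K ℂ) (hψlc : IsLocallyConstant (⇑ψ)) (hψne : ψ ≠ 1)
    {V : Type*} [AddCommGroup V] [Module ℂ V]
    (ρ : Rep K V) (hρ : IsSmoothRep ρ) (c : CompSeries ρ)
    (χ : Kˣ →* ℂˣ) (hχ : SmoothMulChar χ) :
    Module.Finite ℂ (V ⧸ tTwistKer ρ χ) ∧ Module.Finite ℂ ↥(tEigen ρ χ) ∧
    Module.finrank ℂ (V ⧸ tTwistKer ρ χ)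
      = Module.finrank ℂ ↥(tEigen ρ χ) + c.deg (SRep ψ hψlc) := by
  have hindex := c.repHasIndex hψlc hψne hχ hρ.isSmooth
  have hinv : (twist (ρ.comp xTHom) χ).invariants = tEigen ρ χ :=
    Submodule.ext fun _ => mem_invariants_twist
  have hcoinv : Representation.Coinvariants.ker (twist (ρ.comp xTHom) χ) = tTwistKer ρ χ :=
    coinvariantsKer_twist χ
  have hdim := hindex.finrank_sub_finrank
  rw [hinv, hcoinv] at hdim
  refine ⟨hcoinv ▸ hindex.finite_coinvariants, hinv ▸ hindex.finite_invariants, ?_⟩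
  lia

theorem statement7
    (hchar : (2 : K) ≠ 0)
    (ψ : AddChar K ℂ) (hψlc : IsLocallyConstant (⇑ψ)) (hψne : ψ ≠ 1)
    {V : Type*} [AddCommGroup V] [Module ℂ V]
    (ρ : Rep K V) (hρ : IsSmoothRep ρ) (c : CompSeries ρ)
    (χ : Kˣ →* ℂˣ) (hχ : SmoothMulChar χ) :
    Module.Finite ℂ (V ⧸ tTwistKer ρ χ) ∧ Module.Finite ℂ ↥(tEigen ρ χ) ∧
    Module.finrank ℂ (V ⧸ tTwistKer ρ χ)
      = Module.finrank ℂ ↥(tEigen ρ χ) + c.deg (SRep ψ hψlc) := by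
  exact statement7_general ψ hψlc hψne ρ hρ c χ hχ

end Statements

end PSW
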